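/- (Theorem 1.2, part 2) Let d ≥ 3 and 1 ≤ m ≤ d−2, and assume λ > 0 satisfies e^λ (m/(d+1) + (1 − m/(d+1)) q(d+1−m)) < 1. Then there exist N_1(d,m,λ) > 0 and u_1(d,m,λ) > 0 such that for all N ≥ N_1, all j ∈ ℤ and all A ∈ A^j_m: P[X_{[0,D^j_{u_1 N^{d−1}}]} ⊇ A] ≤ exp(−λ|A|). -/

import Mathlib

open MeasureTheory Filter
open scoped ENNReal Classical

namespace DiscCyl

/-- The lattice `ℤ^{d+1}`. -/
abbrev Lat (d : ℕ) := Fin (d + 1) → ℤ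

/-- The discrete cylinder `E = (ℤ/Nℤ)^d × ℤ`. -/
abbrev Cyl (d N : ℕ) := (Fin d → ZMod N) × ℤ

instance (N : ℕ) : MeasurableSpace (ZMod N) := ⊤

instance (N : ℕ) : Countable (ZMod N) := by
  cases N with
  | zero => exact inferInstanceAs (Countable ℤ)
  | succ n => exact inferInstanceAs (Countable (Fin (n + 1)))

/-- The canonical projection `π_E : ℤ^{d+1} → E`. -/
def projE (d N : ℕ) (v : Lat d) : Cyl d N :=
  (fun i => (v i.castSucc : ZMod N), v (Fin.last d))

/-- The `2(d+1)` unit vectors `±e_i` of `ℤ^{d+1}`. -/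
def unitVecs (d : ℕ) : Finset (Lat d) :=
  Finset.image (fun p : Fin (d + 1) × Bool => Pi.single p.1 (if p.2 then (1 : ℤ) else -1))
    Finset.univ

/-- One-step transition probability of simple random walk on the cylinder:
each of the `2(d+1)` unit moves of `ℤ^{d+1}` is taken with probability `1/(2(d+1))`
and projected to `E`. -/
noncomputable def stepProb (d N : ℕ) (x y : Cyl d N) : ℝ≥0∞ :=
  (((unitVecs d).filter fun e => x + projE d N e = y).card : ℝ≥0∞) / (2 * (d + 1))

/-- `Pl` is the family of laws (indexed by the starting point) of simple random walk
on the cylinder `E = (ℤ/Nℤ)^d × ℤ`. -/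
def IsCylRW (d N : ℕ) (Pl : Cyl d N → Measure (ℕ → Cyl d N)) : Prop :=
  (∀ x, IsProbabilityMeasure (Pl x)) ∧
    ∀ (x : Cyl d N) (n : ℕ) (γ : ℕ → Cyl d N),
      Pl x {ω | ∀ i ≤ n, ω i = γ i} =
        (if γ 0 = x then 1 else 0) * ∏ i ∈ Finset.range n, stepProb d N (γ i) (γ (i + 1))

/-- The lattice `ℤ^ν`. -/
abbrev ZLat (ν : ℕ) := Fin ν → ℤ

/-- Unit vectors of `ℤ^ν`. -/
def zUnitVecs (ν : ℕ) : Set (ZLat ν) :=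
  {v | ∃ i, v = Pi.single i 1 ∨ v = Pi.single i (-1)}

/-- One-step transition probability of simple random walk on `ℤ^ν`. -/
noncomputable def zStep (ν : ℕ) (x y : ZLat ν) : ℝ≥0∞ :=
  if y - x ∈ zUnitVecs ν then (2 * ν : ℝ≥0∞)⁻¹ else 0

/-- `Ql` is the family of laws of simple random walk on `ℤ^ν`. -/
def IsLatRW (ν : ℕ) (Ql : ZLat ν → Measure (ℕ → ZLat ν)) : Prop :=
  (∀ x, IsProbabilityMeasure (Ql x)) ∧
    ∀ (x : ZLat ν) (n : ℕ) (γ : ℕ → ZLat ν),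
      Ql x {ω | ∀ i ≤ n, ω i = γ i} =
        (if γ 0 = x then 1 else 0) * ∏ i ∈ Finset.range n, zStep ν (γ i) (γ (i + 1))

/-- `q(ν)`: the return probability to the origin of simple random walk on `ℤ^ν`. -/
noncomputable def retProb (ν : ℕ) (Ql : ZLat ν → Measure (ℕ → ZLat ν)) : ℝ :=
  ((Ql 0) {ω | ∃ n : ℕ, 1 ≤ n ∧ ω n = 0}).toReal

/-- Entrance time `H_U` (with value `⊤` if `U` is never entered). -/
noncomputable def entT {X : Type*} (U : Set X) (ω : ℕ → X) : ℕ∞ :=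
  sInf {t : ℕ∞ | ∃ n : ℕ, ω n ∈ U ∧ t = n}

/-- Exit time `T_U`. -/
noncomputable def exitT {X : Type*} (U : Set X) (ω : ℕ → X) : ℕ∞ :=
  entT Uᶜ ω

/-- `after t f ω = t + f (θ_t ω)`, with value `⊤` when `t = ⊤`. -/
noncomputable def after {X : Type*} (t : ℕ∞) (f : (ℕ → X) → ℕ∞) (ω : ℕ → X) : ℕ∞ :=
  t.recTopCoe ⊤ fun m => (m : ℕ∞) + f fun k => ω (k + m)

/-- The block `C_j = (ℤ/Nℤ)^d × ([(j-3/4)N, (j+3/4)N] ∩ ℤ)`. -/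
def Cblk (d N : ℕ) (j : ℤ) : Set (Cyl d N) :=
  {x | ((j : ℝ) - 3 / 4) * N ≤ (x.2 : ℝ) ∧ (x.2 : ℝ) ≤ ((j : ℝ) + 3 / 4) * N}

/-- The block `B_j = (ℤ/Nℤ)^d × [(j-1)N, (j+1)N]`. -/
def Bblk (d N : ℕ) (j : ℤ) : Set (Cyl d N) :=
  {x | (j - 1) * (N : ℤ) ≤ x.2 ∧ x.2 ≤ (j + 1) * (N : ℤ)}

/-- The block `B̃_j = (ℤ/Nℤ)^d × [(j-2)N+1, (j+2)N-1]`. -/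
def Btl (d N : ℕ) (j : ℤ) : Set (Cyl d N) :=
  {x | (j - 2) * (N : ℤ) + 1 ≤ x.2 ∧ x.2 ≤ (j + 2) * (N : ℤ) - 1}

/-- `D^j_1`: time of the first departure from `B̃_j` after the first return to `B_j`. -/
noncomputable def oneExc (d N : ℕ) (j : ℤ) (ω : ℕ → Cyl d N) : ℕ∞ :=
  after (entT (Bblk d N j) ω) (exitT (Btl d N j)) ω

/-- `D^j_k`: time of the `k`-th departure from `B̃_j` (after successive returns to `B_j`). -/
noncomputable def DD (d N : ℕ) (j : ℤ) : ℕ → (ℕ → Cyl d N) → ℕ∞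
  | 0, _ => 0
  | k + 1, ω => after (DD d N j k ω) (oneExc d N j) ω

/-- The law `P` of the walk with initial distribution uniform on `B_0`. -/
noncomputable def lawP (d N : ℕ) (Pl : Cyl d N → Measure (ℕ → Cyl d N)) :
    Measure (ℕ → Cyl d N) :=
  ((N : ℝ≥0∞) ^ d * (2 * N + 1))⁻¹ •
    Measure.sum fun x : Cyl d N => if x ∈ Bblk d N 0 then Pl x else 0

/-- Nearest-neighbour adjacency on the cylinder. -/
def adj (d N : ℕ) (x y : Cyl d N) : Prop :=
  x ≠ y ∧ ∃ e ∈ unitVecs d, y = x + projE d N e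

/-- `x` and `y` are connected by a nearest-neighbour path inside `S`. -/
def connIn (d N : ℕ) (S : Set (Cyl d N)) (x y : Cyl d N) : Prop :=
  Relation.ReflTransGen (fun a b => a ∈ S ∧ b ∈ S ∧ adj d N a b) x y

/-- `S` is a connected set. -/
def IsConnIn (d N : ℕ) (S : Set (Cyl d N)) : Prop :=
  ∀ x ∈ S, ∀ y ∈ S, connIn d N S x y

/-- The boundary `∂U`. -/
def bdry (d N : ℕ) (U : Set (Cyl d N)) : Set (Cyl d N) :=
  {x | x ∉ U ∧ ∃ y ∈ U, adj d N x y}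

/-- `ℓ^∞`-norm on `ℤ^{d+1}`. -/
def linf {d : ℕ} (v : Lat d) : ℕ := Finset.univ.sup fun i => (v i).natAbs

/-- `ℓ^∞`-distance induced on the cylinder. -/
noncomputable def cylDist (d N : ℕ) (x y : Cyl d N) : ℕ :=
  sInf {r : ℕ | ∃ v : Lat d, projE d N v = y - x ∧ linf v = r}

/-- `S` has `ℓ^∞`-diameter at least `L`. -/
def diamGE (d N : ℕ) (S : Set (Cyl d N)) (L : ℕ) : Prop :=
  ∃ x ∈ S, ∃ y ∈ S, L ≤ cylDist d N x y

/-- `X_{[0,n]}`: the set of points visited up to time `n`. -/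
def ran {X : Type*} (ω : ℕ → X) (n : ℕ) : Set X := {y | ∃ i ≤ n, ω i = y}

/-- The set of points visited up to the (possibly infinite) time `t`. -/
def ranE {X : Type*} (ω : ℕ → X) (t : ℕ∞) : Set X :=
  {y | ∃ i : ℕ, (i : ℕ∞) ≤ t ∧ ω i = y}

/-- `L_m`: projections to `E` of `m`-dimensional affine coordinate lattices of `ℤ^{d+1}`. -/
def Lcoll (d N m : ℕ) : Set (Set (Cyl d N)) :=
  {F | ∃ I : Finset (Fin (d + 1)), I.card = m ∧ ∃ y : Lat d,
      F = (fun v => projE d N (y + v)) '' {v : Lat d | ∀ i ∉ I, v i = 0}}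

/-- `A^j_m`: nonempty subsets of `C_j` contained in some `F ∈ L_m`. -/
def Adm (d N : ℕ) (j : ℤ) (m : ℕ) : Set (Finset (Cyl d N)) :=
  {A | A.Nonempty ∧ ↑A ⊆ Cblk d N j ∧ ∃ F ∈ Lcoll d N m, (↑A : Set (Cyl d N)) ⊆ F}

/-- The segment `{x + k·e : 0 ≤ k ≤ L}` (addition via `π_E`). -/
def segment (d N : ℕ) (x : Cyl d N) (e : Lat d) (L : ℕ) : Set (Cyl d N) :=
  {y | ∃ k : ℕ, k ≤ L ∧ y = x + projE d N ((k : ℤ) • e)}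

/-- The event `V_{K,j,t}` (with `k = ⌊t⌋` excursions). -/
def Vev (d N : ℕ) (K : ℝ) (j : ℤ) (k : ℕ) : Set (ℕ → Cyl d N) :=
  {ω | ∀ x ∈ Cblk d N j, ∀ e ∈ unitVecs d, ∃ i : ℕ, (i : ℝ) < Real.sqrt N ∧
      ∀ l : ℕ, i ≤ l → l ≤ i + ⌊K * Real.log N⌋₊ →
        x + projE d N ((l : ℤ) • e) ∉ ranE ω (DD d N j k ω)}

/-- The event `U_{K,j,t}` (with `k = ⌊t⌋` excursions). -/
def Uev (d N : ℕ) (K : ℝ) (j : ℤ) (k : ℕ) : Set (ℕ → Cyl d N) :=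
  {ω | ∀ F ∈ Lcoll d N 2, ∀ n : ℕ, (n : ℕ∞) ≤ DD d N j k ω →
      ∀ O₁ O₂ : Set (Cyl d N),
        O₁ ⊆ (F ∩ Cblk d N j) \ ran ω n → O₂ ⊆ (F ∩ Cblk d N j) \ ran ω n →
        IsConnIn d N O₁ → IsConnIn d N O₂ →
        diamGE d N O₁ ⌊K * Real.log N⌋₊ → diamGE d N O₂ ⌊K * Real.log N⌋₊ →
        ∀ p ∈ O₁, ∀ q ∈ O₂, connIn d N ((F ∩ Cblk d N j) \ ran ω n) p q}

/-- A (finite) set `S` disconnects the cylinder. -/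
def Disconnects (d N : ℕ) (S : Set (Cyl d N)) : Prop :=
  S.Finite ∧ ∃ M₀ : ℕ, ∀ M : ℕ, M₀ ≤ M → ∀ x y : Cyl d N,
    (M : ℤ) ≤ x.2 → y.2 ≤ -(M : ℤ) → ¬ connIn d N Sᶜ x y

/-- The disconnection time `T_N`. -/
noncomputable def discT (d N : ℕ) (ω : ℕ → Cyl d N) : ℕ∞ :=
  sInf {t : ℕ∞ | ∃ n : ℕ, Disconnects d N (ran ω n) ∧ t = n}

/-- `r ≤ t` for `t : ℕ∞` and a real threshold `r` (trivially true when `t = ⊤`). -/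
def geReal (t : ℕ∞) (r : ℝ) : Prop := ∀ n : ℕ, t = (n : ℕ∞) → r ≤ n

/-- `r < t` for `t : ℕ∞` and a real threshold `r` (trivially true when `t = ⊤`). -/
def gtReal (t : ℕ∞) (r : ℝ) : Prop := ∀ n : ℕ, t = (n : ℕ∞) → r < n

/-- `φ_j(z) = E_z[exp(λ Σ_{x∈A} 1{H_x < T_{B̃_j}})]`. -/
noncomputable def phi (d N : ℕ) (Pl : Cyl d N → Measure (ℕ → Cyl d N)) (j : ℤ) (lam : ℝ)
    (A : Finset (Cyl d N)) (z : Cyl d N) : ℝ :=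
  ∫ ω, Real.exp (lam * ∑ x ∈ A, if entT {x} ω < exitT (Btl d N j) ω then (1 : ℝ) else 0)
    ∂(Pl z)

/-- `‖φ_j‖_∞`. -/
noncomputable def phiSup (d N : ℕ) (Pl : Cyl d N → Measure (ℕ → Cyl d N)) (j : ℤ) (lam : ℝ)
    (A : Finset (Cyl d N)) : ℝ :=
  ⨆ z : Cyl d N, phi d N Pl j lam A z

/-- `q_N = sup {P_z[H_F < T_{B̃_j}] : F ∈ L_m, z ∈ ∂F}`. -/
noncomputable def qNval (d N m : ℕ) (Pl : Cyl d N → Measure (ℕ → Cyl d N)) (j : ℤ) : ℝ :=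
  sSup {r : ℝ | ∃ F ∈ Lcoll d N m, ∃ z ∈ bdry d N F,
      r = ((Pl z) {ω | entT F ω < exitT (Btl d N j) ω}).toReal}

/-- The times `τ_k`: `τ_0` is the entrance time of `(ℤ/Nℤ)^d × Nℤ`, and `τ_{k+1}` is the
first time after `τ_k` at which the vertical component has moved by exactly `N`. -/
noncomputable def tauT (d N : ℕ) : ℕ → (ℕ → Cyl d N) → ℕ∞
  | 0, ω => entT {x : Cyl d N | (N : ℤ) ∣ x.2} ω
  | k + 1, ω =>
      (tauT d N k ω).recTopCoe ⊤ fun m =>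
        sInf {t : ℕ∞ | ∃ n : ℕ, m < n ∧ ((ω n).2 - (ω m).2).natAbs = N ∧ t = n}

/-- `*`-adjacency on `ℤ²`. -/
def starAdj (x y : ℤ × ℤ) : Prop :=
  x ≠ y ∧ (x.1 - y.1).natAbs ≤ 1 ∧ (x.2 - y.2).natAbs ≤ 1

/-!
Run the walk and reveal the points of `A` one at a time as they are visited. If `h ≥ 1` is
superharmonic on `B̃_j` and the average of `h` over the neighbours of any point of `A` is at most
`e^{-l} h` there, then each newly visited point costs a factor `e^{-l}`, at the price of a factor
`M = sup h` over the entrance points of `B_j` for each excursion. Hence `A` is covered within `k`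
excursions with probability at most `e^{-l|A|} M^k h` (starting value of `h`).

Such an `h` is `1 + c U`, where `U` is a superharmonic majorant of the probability of hitting `A`.
Near the flat `F ⊇ A` the cylinder looks like `ℤ^{d+1}`, so up to `ε` one may take for `U` the
probability that the projected walk on `ℤ^{d+1-m}` hits the origin; its average over the neighbours
of a point of `A` is `m/(d+1) + (1 - m/(d+1)) q(d+1-m)`, and the hypothesis on `λ` leaves room for
some `l > λ`. Far away `U` is the union bound by Newtonian potentials of the points of `A`, which
is of order `|A| N^{1-d}` at the entrance points of `B_j`. Thus `M^k ≤ e^{O(k N^{1-d} |A|)}`, and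
this is absorbed in `e^{(l-λ)|A|}` when `k ≤ u₁ N^{d-1}` with `u₁` small.
-/

section Markov

variable {X : Type*}

/-- The path that starts at `x` and then runs through `ω`. -/
def consPath (x : X) (ω : ℕ → X) : ℕ → X
  | 0 => x
  | n + 1 => ω n

@[simp] lemma consPath_zero (x : X) (ω : ℕ → X) : consPath x ω 0 = x := rfl

@[simp] lemma consPath_succ (x : X) (ω : ℕ → X) (n : ℕ) : consPath x ω (n + 1) = ω n := rfl

lemma consPath_preimage_path (x : X) (γ : ℕ → X) (n : ℕ) :
    consPath x ⁻¹' {ω | ∀ i ≤ n + 1, ω i = γ i} =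
      if γ 0 = x then {ω | ∀ i ≤ n, ω i = γ (i + 1)} else ∅ := by
  ext ω
  simp only [Set.mem_preimage, Set.mem_ofPred_eq]
  constructor
  · intro h
    have hx : γ 0 = x := (h 0 (by lia)).symm
    rw [if_pos hx]
    exact fun i hi ↦ h (i + 1) (by lia)
  · split_ifs with hx
    · rintro h (_ | i) hi
      exacts [hx.symm, h i (by lia)]
    · exact fun h ↦ h.elim

variable [MeasurableSpace X]

/-- `μ x` is, for each `x`, the law of the Markov chain with transition probabilities `p`
started at `x`, as prescribed by the probabilities of its finite paths. -/
def IsMarkovFamily (p : X → X → ℝ≥0∞) (μ : X → Measure (ℕ → X)) : Prop :=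
  (∀ x, IsProbabilityMeasure (μ x)) ∧
    ∀ (x : X) (n : ℕ) (γ : ℕ → X),
      μ x {ω | ∀ i ≤ n, ω i = γ i} =
        (if γ 0 = x then 1 else 0) * ∏ i ∈ Finset.range n, p (γ i) (γ (i + 1))

variable [MeasurableSingletonClass X]

lemma measurableEmbedding_consPath (x : X) : MeasurableEmbedding (consPath x) := by
  have hrange : Set.range (consPath x) = {ω | ω 0 = x} := by
    refine Set.Subset.antisymm (Set.range_subset_iff.2 fun ω ↦ rfl) fun ω hω ↦
      ⟨fun n ↦ ω (n + 1), funext fun n ↦ ?_⟩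
    cases n with
    | zero => exact hω.symm
    | succ n => rfl
  refine .of_measurable_inverse (g := fun ω n ↦ ω (n + 1)) (measurable_pi_iff.2 fun n ↦ ?_) ?_
    (measurable_pi_iff.2 fun n ↦ measurable_pi_apply (n + 1)) fun ω ↦ rfl
  · cases n with
    | zero => exact measurable_const
    | succ n => exact measurable_pi_apply n
  · rw [hrange]
    exact measurable_pi_apply (X := fun _ ↦ X) 0 (measurableSet_singleton x)

variable [Countable X]

lemma measure_ext_of_paths {μ ν : Measure (ℕ → X)} [IsFiniteMeasure μ]
    (h : ∀ (n : ℕ) (γ : ℕ → X),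
      μ {ω | ∀ i ≤ n + 1, ω i = γ i} = ν {ω | ∀ i ≤ n + 1, ω i = γ i}) : μ = ν := by
  have hproj : IsProjectiveMeasureFamily fun I : Finset ℕ ↦ μ.map I.restrict :=
    ProbabilityTheory.isProjectiveMeasureFamily_map_restrict fun n ↦
      (measurable_pi_apply n).aemeasurable
  refine IsProjectiveLimit.unique (fun I ↦ rfl)
    ((isProjectiveLimit_nat_iff' hproj ν 1).2 fun n hn ↦ Measure.ext_of_singleton fun g ↦ ?_)
  obtain ⟨n, rfl⟩ := Nat.exists_eq_add_of_le' hn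
  obtain ⟨γ, rfl⟩ : ∃ γ : ℕ → X, Preorder.frestrictLe (n + 1) γ = g :=
    ⟨fun i ↦ g ⟨min i (n + 1), by simp⟩, funext fun i ↦ by
      have := Finset.mem_Iic.1 i.2
      simp [this]⟩
  have hmap (ρ : Measure (ℕ → X)) :
      ρ.map (Preorder.frestrictLe (n + 1)) {Preorder.frestrictLe (n + 1) γ} =
        ρ {ω | ∀ i ≤ n + 1, ω i = γ i} := by
    rw [Measure.map_apply (Preorder.measurable_frestrictLe _) (measurableSet_singleton _)]
    congr 1
    ext ω
    simp [funext_iff]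
  rw [hmap ν, ← h n γ]
  exact (hmap μ).symm

namespace IsMarkovFamily

variable {p : X → X → ℝ≥0∞} {μ : X → Measure (ℕ → X)}

lemma eq_sum_map (h : IsMarkovFamily p μ) (x : X) :
    μ x = Measure.sum fun y ↦ p x y • (μ y).map (consPath x) := by
  have := h.1 x
  refine measure_ext_of_paths fun n γ ↦ ?_
  rw [h.2 x (n + 1) γ, Measure.sum_apply_of_countable]
  simp only [Measure.smul_apply, (measurableEmbedding_consPath x).map_apply,
    consPath_preimage_path, smul_eq_mul]
  split_ifs with hx
  · rw [tsum_eq_single (γ 1) fun y hy ↦ ?_]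
    · rw [h.2 (γ 1) n fun i ↦ γ (i + 1), if_pos rfl, Finset.prod_range_succ', hx]
      ring
    · rw [h.2 y n fun i ↦ γ (i + 1), if_neg (Ne.symm hy), zero_mul, mul_zero]
  · simp

lemma measure_eq_tsum (h : IsMarkovFamily p μ) (x : X) (S : Set (ℕ → X)) :
    μ x S = ∑' y, p x y * μ y (consPath x ⁻¹' S) := by
  conv_lhs => rw [h.eq_sum_map x]
  simp only [Measure.sum_apply_of_countable, Measure.smul_apply, smul_eq_mul,
    (measurableEmbedding_consPath x).map_apply]

lemma real_eq_of_start (h : IsMarkovFamily p μ) {x : X} {S T : Set (ℕ → X)}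
    (hST : ∀ ω, ω 0 = x → (ω ∈ S ↔ ω ∈ T)) : (μ x).real S = (μ x).real T := by
  have hpre : consPath x ⁻¹' S = consPath x ⁻¹' T := Set.ext fun ω ↦ hST _ rfl
  rw [measureReal_def, measureReal_def, h.measure_eq_tsum x S, h.measure_eq_tsum x T, hpre]

end IsMarkovFamily

end Markov

section RandomWalk

variable {S E : Type*} [Fintype S] [AddCommGroup E] {v : S → E} {f g : E → ℝ} {x : E}

/-- The transition probabilities of the random walk whose increments are uniform among the
`v s`, `s : S`, counted with multiplicity. -/
noncomputable def walkKernel (v : S → E) (x y : E) : ℝ≥0∞ :=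
  (Finset.univ.filter fun s ↦ x + v s = y).card / Fintype.card S

/-- The expectation of `f` after one step, from `x`, of the random walk with uniform increments
`v s`. A function `f` with `stepAvg v f x ≤ f x` is superharmonic at `x`. -/
noncomputable def stepAvg (v : S → E) (f : E → ℝ) (x : E) : ℝ :=
  (∑ s, f (x + v s)) / Fintype.card S

lemma stepAvg_mono (h : ∀ s, f (x + v s) ≤ g (x + v s)) : stepAvg v f x ≤ stepAvg v g x := by
  unfold stepAvg
  gcongr with s
  exact h s

lemma stepAvg_const [Nonempty S] (c : ℝ) : stepAvg v (fun _ ↦ c) x = c := by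
  simp [stepAvg]

lemma stepAvg_le_of_forall_le [Nonempty S] {c : ℝ} (h : ∀ s, f (x + v s) ≤ c) :
    stepAvg v f x ≤ c :=
  (stepAvg_mono h).trans_eq (stepAvg_const c)

lemma stepAvg_add : stepAvg v (fun y ↦ f y + g y) x = stepAvg v f x + stepAvg v g x := by
  simp [stepAvg, Finset.sum_add_distrib, add_div]

lemma stepAvg_const_mul (c : ℝ) : stepAvg v (fun y ↦ c * f y) x = c * stepAvg v f x := by
  simp [stepAvg, ← Finset.mul_sum, mul_div_assoc]

lemma stepAvg_sum {ι : Type*} (A : Finset ι) (F : ι → E → ℝ) :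
    stepAvg v (fun y ↦ ∑ i ∈ A, F i y) x = ∑ i ∈ A, stepAvg v (F i) x := by
  simp only [stepAvg, ← Finset.sum_div]
  rw [Finset.sum_comm]

lemma stepAvg_comp_sub (y : E) : stepAvg v (fun z ↦ f (z - y)) x = stepAvg v f (x - y) := by
  simp only [stepAvg, sub_add_eq_add_sub]

lemma stepAvg_min_le (hg : stepAvg v g x ≤ g x) (hf : stepAvg v f x ≤ f x ∨ g x ≤ f x) :
    stepAvg v (fun y ↦ min (f y) (g y)) x ≤ min (f x) (g x) := by
  have hmin_g : stepAvg v (fun y ↦ min (f y) (g y)) x ≤ stepAvg v g x :=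
    stepAvg_mono fun s ↦ min_le_right _ _
  have hmin_f : stepAvg v (fun y ↦ min (f y) (g y)) x ≤ stepAvg v f x :=
    stepAvg_mono fun s ↦ min_le_left _ _
  exact le_min (hf.elim hmin_f.trans (hmin_g.trans hg).trans) (hmin_g.trans hg)

variable [MeasurableSpace E] [Countable E] [MeasurableSingletonClass E] {μ : E → Measure (ℕ → E)}

lemma IsMarkovFamily.real_eq_stepAvg (h : IsMarkovFamily (walkKernel v) μ) (x : E)
    (T : Set (ℕ → E)) :
    (μ x).real T = stepAvg v (fun y ↦ (μ y).real (consPath x ⁻¹' T)) x := by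
  have := h.1
  have hsum : μ x T = ∑ s, (Fintype.card S : ℝ≥0∞)⁻¹ * μ (x + v s) (consPath x ⁻¹' T) := by
    have hterm (y : E) : walkKernel v x y * μ y (consPath x ⁻¹' T) =
        ∑ s, if y = x + v s then (Fintype.card S : ℝ≥0∞)⁻¹ * μ y (consPath x ⁻¹' T) else 0 := by
      rw [← Finset.sum_filter, Finset.sum_const, walkKernel, nsmul_eq_mul, ENNReal.div_eq_inv_mul,
        mul_assoc, mul_left_comm]
      simp only [eq_comm]
    simp only [h.measure_eq_tsum x T, hterm]
    rw [Summable.tsum_finsetSum fun _ _ ↦ ENNReal.summable]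
    simp only [tsum_ite_eq]
  rw [measureReal_def, hsum, ENNReal.toReal_sum fun s _ ↦ ?_]
  · simp [stepAvg, measureReal_def, ← Finset.mul_sum, div_eq_inv_mul]
  · have hS : (Fintype.card S : ℝ≥0∞) ≠ 0 := Nat.cast_ne_zero.2 (Fintype.card_pos_iff.2 ⟨s⟩).ne'
    exact ENNReal.mul_ne_top (ENNReal.inv_ne_top.2 hS) (measure_ne_top _ _)

end RandomWalk

section NearestNeighbour

variable {ι κ : Type*} [DecidableEq ι] [DecidableEq κ]

/-- The nearest-neighbour move of `ℤ^ι` along the coordinate `s.1` with sign `s.2`. -/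
noncomputable def unitVec (s : ι × ℤˣ) : ι → ℤ := Pi.single s.1 (s.2 : ℤ)

lemma unitVec_injective : Function.Injective (unitVec : ι × ℤˣ → ι → ℤ) := by
  rintro ⟨i, σ⟩ ⟨k, τ⟩ h
  have hi := congrFun h i
  obtain rfl : i = k := by
    by_contra hik
    simp [unitVec, hik] at hi
  simpa [unitVec, Units.ext_iff] using hi

lemma exists_unitVec_eq_iff {e : ι → ℤ} :
    (∃ s, unitVec s = e) ↔ ∃ i, Pi.single i 1 = e ∨ Pi.single i (-1) = e := by
  constructor
  · rintro ⟨⟨i, σ⟩, rfl⟩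
    rcases Int.units_eq_one_or σ with rfl | rfl <;> exact ⟨i, by simp [unitVec]⟩
  · rintro ⟨i, h | h⟩
    exacts [⟨(i, 1), h⟩, ⟨(i, -1), h⟩]

lemma abs_unitVec_le_one (s : ι × ℤˣ) (k : ι) : |unitVec s k| ≤ 1 := by
  rcases eq_or_ne k s.1 with rfl | hk
  · rcases Int.units_eq_one_or s.2 with h | h <;> simp [unitVec, h]
  · simp [unitVec, hk]

variable [Fintype ι] [Fintype κ]

lemma sum_unitVec {M : Type*} [AddCommMonoid M] (f : (ι → ℤ) → M) :
    ∑ s : ι × ℤˣ, f (unitVec s) = ∑ i, (f (Pi.single i 1) + f (Pi.single i (-1))) := by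
  simp [Fintype.sum_prod_type, unitVec, UnitsInt.univ]

lemma stepAvg_unitVec_sub [Nonempty ι] (f : (ι → ℤ) → ℝ) (z : ι → ℤ) :
    stepAvg unitVec f z - f z =
      (∑ i, (f (z + Pi.single i 1) + f (z + Pi.single i (-1)) - 2 * f z)) /
        (2 * Fintype.card ι) := by
  have hι : (Fintype.card ι : ℝ) ≠ 0 := by simp
  have hcard : (Fintype.card (ι × ℤˣ) : ℝ) = 2 * Fintype.card ι := by simp [mul_comm]
  rw [stepAvg, sum_unitVec fun e ↦ f (z + e), hcard, Finset.sum_sub_distrib, Finset.sum_const,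
    Finset.card_univ, nsmul_eq_mul]
  field_simp

/-- A walk watched only through some of its coordinates is a lazy walk. -/
lemma stepAvg_unitVec_comp_sub [Nonempty κ] (emb : κ ↪ ι) (f : (κ → ℤ) → ℝ) (z : ι → ℤ) :
    stepAvg unitVec (fun y ↦ f (y ∘ emb)) z - f (z ∘ emb) =
      Fintype.card κ / Fintype.card ι * (stepAvg unitVec f (z ∘ emb) - f (z ∘ emb)) := by
  have : Nonempty ι := ‹Nonempty κ›.map emb
  have hsingle (k : κ) (c : ℤ) :
      (z + Pi.single (emb k) c) ∘ emb = z ∘ emb + Pi.single k c := by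
    ext l
    simp [Pi.single_apply]
  have hsingle_off {i : ι} (hi : i ∉ Set.range emb) (c : ℤ) :
      (z + Pi.single i c) ∘ emb = z ∘ emb := by
    ext l
    have hl : emb l ≠ i := fun h ↦ hi ⟨l, h⟩
    simp [hl]
  rw [stepAvg_unitVec_sub (fun y : ι → ℤ ↦ f (y ∘ emb)), stepAvg_unitVec_sub f,
    ← Fintype.sum_of_injective emb emb.injective _ _
      (fun i hi ↦ by rw [hsingle_off hi, hsingle_off hi]; ring) fun k ↦ by rw [hsingle, hsingle]]
  have hκ : (Fintype.card κ : ℝ) ≠ 0 := by simp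
  field_simp

end NearestNeighbour

lemma zStep_eq_walkKernel {ν : ℕ} (x y : ZLat ν) : zStep ν x y = walkKernel unitVec x y := by
  have hcard : (Fintype.card (Fin ν × ℤˣ) : ℝ≥0∞) = 2 * ν := by simp [mul_comm]
  have hmem : y - x ∈ zUnitVecs ν ↔ ∃ s, unitVec s = y - x := by
    rw [exists_unitVec_eq_iff]
    simp [zUnitVecs, eq_comm]
  rw [zStep, walkKernel, hcard, ENNReal.div_eq_inv_mul, hmem]
  split_ifs with h
  · obtain ⟨s, hs⟩ := h
    rw [Finset.card_eq_one.2 ⟨s, Finset.ext fun s' ↦ ?_⟩, Nat.cast_one, mul_one]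
    simp [← eq_sub_iff_add_eq', ← hs, unitVec_injective.eq_iff]
  · have hne (s : Fin ν × ℤˣ) : x + unitVec s ≠ y := fun hs ↦ h ⟨s, eq_sub_iff_add_eq'.2 hs⟩
    simp [hne]

lemma isMarkovFamily_of_isLatRW {ν : ℕ} {Q : ZLat ν → Measure (ℕ → ZLat ν)}
    (hQ : IsLatRW ν Q) : IsMarkovFamily (walkKernel unitVec) Q := by
  refine ⟨hQ.1, fun x n γ ↦ ?_⟩
  simp only [← zStep_eq_walkKernel]
  convert hQ.2 x n γ

/-- The nearest-neighbour moves on the cylinder. They need not be distinct when `N ≤ 2`. -/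
noncomputable def cylStep (d N : ℕ) (s : Fin (d + 1) × ℤˣ) : Cyl d N := projE d N (unitVec s)

lemma unitVecs_eq_image (d : ℕ) : unitVecs d = Finset.univ.image unitVec := by
  ext e
  simp only [Finset.mem_image, Finset.mem_univ, true_and, exists_unitVec_eq_iff]
  simp [unitVecs, or_comm]

lemma stepProb_eq_walkKernel {d N : ℕ} (x y : Cyl d N) :
    stepProb d N x y = walkKernel (cylStep d N) x y := by
  have hcard : (Fintype.card (Fin (d + 1) × ℤˣ) : ℝ≥0∞) = 2 * (d + 1) := by simp [mul_comm]
  rw [stepProb, walkKernel, hcard, unitVecs_eq_image, Finset.filter_image,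
    Finset.card_image_of_injective _ unitVec_injective]
  congr!

lemma isMarkovFamily_of_isCylRW {d N : ℕ} {P : Cyl d N → Measure (ℕ → Cyl d N)}
    (hP : IsCylRW d N P) : IsMarkovFamily (walkKernel (cylStep d N)) P := by
  refine ⟨hP.1, fun x n γ ↦ ?_⟩
  simp only [← stepProb_eq_walkKernel]
  convert hP.2 x n γ

section HittingProbability

variable {S E : Type*} [Fintype S] [AddCommGroup E] [MeasurableSpace E] {v : S → E}
  {μ : E → Measure (ℕ → E)}

/-- The probability that the walk started at `x` ever visits the origin. -/
noncomputable def hitProb (μ : E → Measure (ℕ → E)) (x : E) : ℝ :=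
  (μ x).real {ω | ∃ n, ω n = 0}

lemma hitProb_le_one (h : IsMarkovFamily (walkKernel v) μ) (x : E) : hitProb μ x ≤ 1 :=
  have := h.1 x
  measureReal_le_one

variable [Countable E] [MeasurableSingletonClass E]

lemma hitProb_zero (h : IsMarkovFamily (walkKernel v) μ) : hitProb μ 0 = 1 := by
  have := h.1 0
  have hhit (ω : ℕ → E) (hω : ω 0 = 0) : ω ∈ {ω : ℕ → E | ∃ n, ω n = 0} ↔ ω ∈ Set.univ :=
    iff_of_true ⟨0, hω⟩ trivial
  rw [hitProb, h.real_eq_of_start hhit, probReal_univ]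

lemma stepAvg_hitProb_of_ne (h : IsMarkovFamily (walkKernel v) μ) {x : E} (hx : x ≠ 0) :
    stepAvg v (hitProb μ) x = hitProb μ x := by
  have hpre : consPath x ⁻¹' {ω | ∃ n, ω n = 0} = {ω | ∃ n, ω n = 0} := by
    ext ω
    simp [← Nat.or_exists_add_one (p := fun n ↦ consPath x ω n = 0), hx]
  rw [hitProb, h.real_eq_stepAvg, hpre]
  rfl

lemma stepAvg_hitProb_zero (h : IsMarkovFamily (walkKernel v) μ) :
    stepAvg v (hitProb μ) 0 = (μ 0).real {ω | ∃ n, 1 ≤ n ∧ ω n = 0} := by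
  have hpre : consPath 0 ⁻¹' {ω | ∃ n, 1 ≤ n ∧ ω n = 0} = {ω : ℕ → E | ∃ n, ω n = 0} := by
    ext ω
    simp [← Nat.or_exists_add_one (p := fun n ↦ 1 ≤ n ∧ consPath 0 ω n = 0)]
  rw [h.real_eq_stepAvg, hpre]
  rfl

lemma stepAvg_hitProb_le [Nonempty S] (h : IsMarkovFamily (walkKernel v) μ) (x : E) :
    stepAvg v (hitProb μ) x ≤ hitProb μ x := by
  rcases eq_or_ne x 0 with rfl | hx
  · rw [hitProb_zero h]
    exact stepAvg_le_of_forall_le fun s ↦ hitProb_le_one h _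
  · exact (stepAvg_hitProb_of_ne h hx).le

end HittingProbability

section Excursions

variable {X : Type*} {B Bt : Set X} {x : X} {ω : ℕ → X} {t : ℕ∞} {f : (ℕ → X) → ℕ∞}

lemma after_coe (m : ℕ) : after m f ω = m + f fun k ↦ ω (k + m) := rfl

@[simp] lemma after_zero : after 0 f ω = f ω := by
  simpa using after_coe (f := f) (ω := ω) 0

lemma after_of_forall_eq_zero (hf : ∀ ω', f ω' = 0) : after t f ω = t := by
  cases t with
  | top => rfl
  | coe m => rw [after_coe, hf, add_zero]

lemma after_after {g : (ℕ → X) → ℕ∞} :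
    after (after t f ω) g ω = after t (fun ω' ↦ after (f ω') g ω') ω := by
  cases t with
  | top => rfl
  | coe m =>
    simp only [after_coe]
    generalize f (fun k ↦ ω (k + m)) = s
    cases s with
    | top => rfl
    | coe i =>
      rw [← Nat.cast_add, after_coe, after_coe, Nat.cast_add, add_assoc]
      simp only [add_right_comm, add_assoc, add_comm m i]

lemma after_one_add_consPath : after (1 + t) f (consPath x ω) = 1 + after t f ω := by
  cases t with
  | top => rfl
  | coe m =>
    rw [← Nat.cast_one, ← Nat.cast_add, after_coe, after_coe, Nat.cast_add, add_assoc]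
    simp only [← add_assoc, add_comm 1 m, consPath_succ]

lemma entT_of_mem {U : Set X} (h : ω 0 ∈ U) : entT U ω = 0 :=
  le_antisymm (sInf_le ⟨0, h, rfl⟩) zero_le

lemma entT_le {U : Set X} {n : ℕ} (h : ω n ∈ U) : entT U ω ≤ n := sInf_le ⟨n, h, rfl⟩

lemma entT_consPath_of_notMem {U : Set X} (hx : x ∉ U) :
    entT U (consPath x ω) = 1 + entT U ω := by
  refine le_antisymm ?_ (le_sInf ?_)
  · rw [entT, entT, ENat.add_sInf]
    refine le_iInf₂ ?_
    rintro _ ⟨n, hn, rfl⟩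
    rw [add_comm, ← Nat.cast_succ]
    exact entT_le hn
  · rintro _ ⟨_ | n, hn, rfl⟩
    · exact absurd hn hx
    · rw [Nat.cast_succ, add_comm]
      gcongr
      exact entT_le hn

/-- The time of the `k`-th departure from `Bt` after successive returns to `B`. It is built by
prepending excursions, while the times `D_k` are usually built by appending them. -/
noncomputable def departT (B Bt : Set X) : ℕ → (ℕ → X) → ℕ∞
  | 0, _ => 0
  | k + 1, ω => after (after (entT B ω) (exitT Bt) ω) (departT B Bt k) ω

lemma departT_succ_eq_after_departT (k : ℕ) (ω : ℕ → X) :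
    departT B Bt (k + 1) ω =
      after (departT B Bt k ω) (fun ω' ↦ after (entT B ω') (exitT Bt) ω') ω := by
  induction k generalizing ω with
  | zero =>
    have hend : after (after (entT B ω) (exitT Bt) ω) (departT B Bt 0) ω =
        after (entT B ω) (exitT Bt) ω := after_of_forall_eq_zero fun _ ↦ rfl
    exact hend.trans after_zero.symm
  | succ k ih =>
    have ih' : departT B Bt (k + 1) = fun ω ↦
        after (departT B Bt k ω) (fun ω' ↦ after (entT B ω') (exitT Bt) ω') ω := funext ih
    conv_lhs => rw [departT, ih']
    exact after_after.symm

lemma DD_eq_departT {d N : ℕ} (j : ℤ) (k : ℕ) :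
    DD d N j k = departT (Bblk d N j) (Btl d N j) k := by
  induction k with
  | zero => rfl
  | succ k ih =>
    funext ω
    rw [departT_succ_eq_after_departT, DD, ih]
    rfl

lemma departT_succ_consPath_of_notMem (hx : x ∉ B) (k : ℕ) :
    departT B Bt (k + 1) (consPath x ω) = 1 + departT B Bt (k + 1) ω := by
  rw [departT, entT_consPath_of_notMem hx, after_one_add_consPath, after_one_add_consPath, departT]

lemma departT_succ_of_mem (h : ω 0 ∈ B) (k : ℕ) :
    departT B Bt (k + 1) ω = after (exitT Bt ω) (departT B Bt k) ω := by
  rw [departT, entT_of_mem h, after_zero]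

/-- The points visited by `ω` up to time `t`, among its first `n` steps. -/
def visitedWithin (n : ℕ) (ω : ℕ → X) (t : ℕ∞) : Set X :=
  {y | ∃ i < n, (i : ℕ∞) ≤ t ∧ ω i = y}

lemma visitedWithin_mono {n m : ℕ} {s : ℕ∞} (hnm : n ≤ m) (hst : s ≤ t) :
    visitedWithin n ω s ⊆ visitedWithin m ω t :=
  fun _ ⟨i, hi, hit, h⟩ ↦ ⟨i, hi.trans_le hnm, hit.trans hst, h⟩

lemma visitedWithin_time_zero (n : ℕ) : visitedWithin n ω 0 ⊆ {ω 0} := by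
  rintro _ ⟨i, -, hi, rfl⟩
  simp_all

lemma visitedWithin_consPath (n : ℕ) :
    visitedWithin (n + 1) (consPath x ω) (1 + t) = insert x (visitedWithin n ω t) := by
  ext y
  constructor
  · rintro ⟨_ | i, hi, hit, rfl⟩
    · exact Set.mem_insert _ _
    · rw [Nat.cast_succ, add_comm] at hit
      exact .inr ⟨i, by lia, by simpa using hit, rfl⟩
  · rintro (rfl | ⟨i, hi, hit, rfl⟩)
    · exact ⟨0, by lia, by simp, rfl⟩
    · refine ⟨i + 1, by lia, ?_, rfl⟩
      rw [Nat.cast_succ, add_comm]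
      gcongr

lemma subset_ranE_iff_exists (A : Finset X) :
    (∀ y ∈ A, y ∈ ranE ω t) ↔ ∃ n, ↑A ⊆ visitedWithin n ω t := by
  constructor
  · intro h
    refine Directed.exists_mem_subset_of_finset_subset_biUnion
      (Monotone.directed_le fun n m hnm ↦ visitedWithin_mono hnm le_rfl) fun y hy ↦ ?_
    obtain ⟨i, hi, rfl⟩ := h y hy
    exact Set.mem_iUnion.2 ⟨i + 1, i, by lia, hi, rfl⟩
  · rintro ⟨n, hn⟩ y hy
    obtain ⟨i, -, hi, h⟩ := hn hy
    exact ⟨i, hi, h⟩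

/-- The event that `A` is covered within `n` steps and by the `k`-th departure. -/
def coverBetween (B Bt : Set X) (A : Finset X) (n k : ℕ) : Set (ℕ → X) :=
  {ω | ↑A ⊆ visitedWithin n ω (departT B Bt k ω)}

/-- The event that `A` is covered within `n` steps and by the `k`-th departure following the
first exit from `Bt`: an excursion is considered to be under way at time `0`. -/
def coverDuring (B Bt : Set X) (A : Finset X) (n k : ℕ) : Set (ℕ → X) :=
  {ω | ↑A ⊆ visitedWithin n ω (after (exitT Bt ω) (departT B Bt k) ω)}

lemma consPath_preimage_coverDuring [DecidableEq X] (hx : x ∈ Bt) (A : Finset X) (n k : ℕ) :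
    consPath x ⁻¹' coverDuring B Bt A (n + 1) k = coverDuring B Bt (A.erase x) n k := by
  ext ω
  simp only [coverDuring, Set.mem_preimage, Set.mem_ofPred_eq, exitT,
    entT_consPath_of_notMem (Set.notMem_compl_iff.2 hx), after_one_add_consPath,
    visitedWithin_consPath, Finset.coe_erase, Set.sdiff_singleton_subset_iff]

lemma real_le_exp_mul_of_null [MeasurableSpace X] {ρ : Measure (ℕ → X)} [IsProbabilityMeasure ρ]
    {A : Finset X} {T : Set (ℕ → X)} (hT : A.Nonempty → ρ.real T = 0) (l : ℝ) {c : ℝ}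
    (hc : 1 ≤ c) : ρ.real T ≤ Real.exp (-l * A.card) * c := by
  rcases A.eq_empty_or_nonempty with rfl | hA
  · simpa using measureReal_le_one.trans hc
  · rw [hT hA]
    positivity

variable {S E : Type*} [Fintype S] [AddCommGroup E] {v : S → E} {B Bt : Set E} {A : Finset E}
  {l M : ℝ} {h : E → ℝ}

/-- A weight `h` controlling `E[e^{l · #(new points of A visited)}]` over an excursion from `B`
to the outside of `Bt`: it is superharmonic on `Bt`, gains a factor `e^l` at each point of `A`,
and is at most `M` where an excursion starts from outside. -/
structure IsExcursionWeight (v : S → E) (B Bt : Set E) (A : Finset E) (l M : ℝ) (h : E → ℝ) :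
    Prop where
  one_le : ∀ x, 1 ≤ h x
  stepAvg_le : ∀ x ∈ Bt, stepAvg v h x ≤ h x
  exp_mul_stepAvg_le : ∀ x ∈ A, Real.exp l * stepAvg v h x ≤ h x
  le_of_enter : ∀ x ∉ B, ∀ s, x + v s ∈ B → h (x + v s) ≤ M
  one_le_bound : 1 ≤ M

namespace IsExcursionWeight

lemma one_le_pow_mul (hw : IsExcursionWeight v B Bt A l M h) (k : ℕ) (x : E) :
    1 ≤ M ^ k * h x :=
  one_le_mul_of_one_le_of_one_le (one_le_pow₀ hw.one_le_bound) (hw.one_le x)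

variable [MeasurableSpace E] {μ : E → Measure (ℕ → E)} [Countable E] [MeasurableSingletonClass E]

lemma real_coverBetween_le (hw : IsExcursionWeight v B Bt A l M h)
    (hμ : IsMarkovFamily (walkKernel v) μ) [Nonempty S] {A' : Finset E} (hA'B : ↑A' ⊆ B) {n : ℕ}
    (hduring : ∀ k x, (μ x).real (coverDuring B Bt A' n k) ≤
      Real.exp (-l * A'.card) * (M ^ k * h x))
    (hbetween : ∀ k, ∀ x ∉ B, (μ x).real (coverBetween B Bt A' n k) ≤
      Real.exp (-l * A'.card) * M ^ k) (k : ℕ) {x : E} (hx : x ∉ B) :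
    (μ x).real (coverBetween B Bt A' (n + 1) k) ≤ Real.exp (-l * A'.card) * M ^ k := by
  have := hμ.1 x
  have hxA' : x ∉ A' := fun h ↦ hx (hA'B h)
  cases k with
  | zero =>
    refine real_le_exp_mul_of_null (fun ⟨y, hy⟩ ↦ ?_) l (one_le_pow₀ hw.one_le_bound)
    rw [hμ.real_eq_of_start (T := ∅) fun ω hω ↦ iff_of_false (fun hcov ↦ ?_) id,
      measureReal_empty]
    have hyx : y = x := (visitedWithin_time_zero _ (hcov hy)).trans hω
    exact hxA' (hyx ▸ hy)
  | succ k =>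
    have hpre : consPath x ⁻¹' coverBetween B Bt A' (n + 1) (k + 1) =
        coverBetween B Bt A' n (k + 1) := by
      ext ω
      simp only [coverBetween, Set.mem_preimage, Set.mem_ofPred_eq,
        departT_succ_consPath_of_notMem hx, visitedWithin_consPath,
        Set.subset_insert_iff_of_notMem (Finset.mem_coe.not.2 hxA')]
    rw [hμ.real_eq_stepAvg, hpre]
    refine stepAvg_le_of_forall_le fun s ↦ ?_
    by_cases hs : x + v s ∈ B
    · rw [hμ.real_eq_of_start (T := coverDuring B Bt A' n k) fun ω hω ↦ by
        simp only [coverBetween, coverDuring, Set.mem_ofPred_eq, departT_succ_of_mem (hω ▸ hs)]]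
      refine (hduring k _).trans ?_
      rw [pow_succ]
      have := hw.one_le_bound
      gcongr
      exact hw.le_of_enter x hx s hs
    · exact hbetween (k + 1) _ hs

lemma real_coverDuring_le (hw : IsExcursionWeight v B Bt A l M h)
    (hμ : IsMarkovFamily (walkKernel v) μ) (hBBt : B ⊆ Bt) {A' : Finset E} (hA'A : A' ⊆ A) {n k : ℕ}
    (hduring : ∀ A'' ⊆ A, ∀ x, (μ x).real (coverDuring B Bt A'' n k) ≤
      Real.exp (-l * A''.card) * (M ^ k * h x))
    (hbetween : ∀ x ∉ B, (μ x).real (coverBetween B Bt A' (n + 1) k) ≤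
      Real.exp (-l * A'.card) * M ^ k) (x : E) :
    (μ x).real (coverDuring B Bt A' (n + 1) k) ≤ Real.exp (-l * A'.card) * (M ^ k * h x) := by
  have hM := hw.one_le_bound
  by_cases hx : x ∈ Bt
  · have hstep : stepAvg v (fun y ↦ (μ y).real (coverDuring B Bt (A'.erase x) n k)) x ≤
        Real.exp (-l * (A'.erase x).card) * M ^ k * stepAvg v h x := by
      rw [← stepAvg_const_mul]
      exact stepAvg_mono fun s ↦
        (hduring _ ((Finset.erase_subset _ _).trans hA'A) _).trans_eq (mul_assoc _ _ _).symm
    rw [hμ.real_eq_stepAvg, consPath_preimage_coverDuring hx]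
    refine hstep.trans ?_
    by_cases hxA' : x ∈ A'
    · have hcard : (A'.card : ℝ) = (A'.erase x).card + 1 := by
        exact_mod_cast (Finset.card_erase_add_one hxA').symm
      calc Real.exp (-l * (A'.erase x).card) * M ^ k * stepAvg v h x
          = Real.exp (-l * A'.card) * (M ^ k * (Real.exp l * stepAvg v h x)) := by
            rw [show -l * ((A'.erase x).card : ℝ) = -l * A'.card + l by rw [hcard]; ring,
              Real.exp_add]
            ring
        _ ≤ Real.exp (-l * A'.card) * (M ^ k * h x) := by
            gcongr
            exact hw.exp_mul_stepAvg_le x (hA'A hxA')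
    · rw [Finset.erase_eq_of_notMem hxA', mul_assoc]
      gcongr
      exact hw.stepAvg_le x hx
  · rw [hμ.real_eq_of_start (T := coverBetween B Bt A' (n + 1) k) fun ω hω ↦ by
      have hexit : exitT Bt ω = 0 := entT_of_mem (by rwa [hω])
      simp only [coverDuring, coverBetween, Set.mem_ofPred_eq, hexit, after_zero]]
    refine (hbetween x fun h ↦ hx (hBBt h)).trans ?_
    gcongr
    exact le_mul_of_one_le_right (by positivity) (hw.one_le x)

lemma real_cover_le (hw : IsExcursionWeight v B Bt A l M h)
    (hμ : IsMarkovFamily (walkKernel v) μ) [Nonempty S] (hBBt : B ⊆ Bt) (hAB : ↑A ⊆ B) (n : ℕ) :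
    ∀ k, ∀ A' ⊆ A,
      (∀ x, (μ x).real (coverDuring B Bt A' n k) ≤ Real.exp (-l * A'.card) * (M ^ k * h x)) ∧
      ∀ x ∉ B, (μ x).real (coverBetween B Bt A' n k) ≤ Real.exp (-l * A'.card) * M ^ k := by
  have := hμ.1
  induction n with
  | zero =>
    have hvisited (ω : ℕ → E) (t : ℕ∞) {A' : Finset E} (hA' : A'.Nonempty) :
        ¬ ↑A' ⊆ visitedWithin 0 ω t := fun hcov ↦ by
      obtain ⟨y, hy⟩ := hA'
      obtain ⟨i, hi, -⟩ := hcov hy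
      exact i.not_lt_zero hi
    refine fun k A' _ ↦ ⟨fun x ↦ ?_, fun x _ ↦ ?_⟩
    · exact real_le_exp_mul_of_null
        (fun hA' ↦ by simp [coverDuring, hvisited _ _ hA']) l (hw.one_le_pow_mul k x)
    · exact real_le_exp_mul_of_null
        (fun hA' ↦ by simp [coverBetween, hvisited _ _ hA']) l (one_le_pow₀ hw.one_le_bound)
  | succ n ih =>
    have hbetween (k : ℕ) (A' : Finset E) (hA'A : A' ⊆ A) (x : E) (hx : x ∉ B) :
        (μ x).real (coverBetween B Bt A' (n + 1) k) ≤ Real.exp (-l * A'.card) * M ^ k :=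
      hw.real_coverBetween_le hμ ((Finset.coe_subset.2 hA'A).trans hAB)
        (fun k ↦ (ih k A' hA'A).1) (fun k ↦ (ih k A' hA'A).2) k hx
    exact fun k A' hA'A ↦ ⟨hw.real_coverDuring_le hμ hBBt hA'A (fun A'' hA'' ↦ (ih k A'' hA'').1)
      (hbetween k A' hA'A), hbetween k A' hA'A⟩

lemma real_coverBetween_le_ite (hw : IsExcursionWeight v B Bt A l M h)
    (hμ : IsMarkovFamily (walkKernel v) μ) [Nonempty S] (hBBt : B ⊆ Bt) (hAB : ↑A ⊆ B)
    (n k : ℕ) (x : E) :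
    (μ x).real (coverBetween B Bt A n k) ≤
      Real.exp (-l * A.card) * (M ^ k * if x ∈ B then h x else 1) := by
  have := hμ.1
  have hcover (k : ℕ) := hw.real_cover_le hμ hBBt hAB n k A subset_rfl
  by_cases hx : x ∈ B
  · rw [if_pos hx]
    cases k with
    | zero =>
      refine (measureReal_mono fun ω hω ↦ ?_).trans ((hcover 0).1 x)
      exact hω.trans (visitedWithin_mono le_rfl zero_le)
    | succ k =>
      rw [hμ.real_eq_of_start (T := coverDuring B Bt A n k) fun ω hω ↦ by
        simp only [coverBetween, coverDuring, Set.mem_ofPred_eq, departT_succ_of_mem (hω ▸ hx)]]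
      refine ((hcover k).1 x).trans ?_
      have := hw.one_le x
      gcongr
      exacts [hw.one_le_bound, k.le_succ]
  · rw [if_neg hx, mul_one]
    exact (hcover k).2 x hx

theorem real_cover_departT_le (hw : IsExcursionWeight v B Bt A l M h)
    (hμ : IsMarkovFamily (walkKernel v) μ) [Nonempty S] (hBBt : B ⊆ Bt) (hAB : ↑A ⊆ B)
    (k : ℕ) (x : E) :
    (μ x).real {ω | ∀ y ∈ A, y ∈ ranE ω (departT B Bt k ω)} ≤
      Real.exp (-l * A.card) * (M ^ k * if x ∈ B then h x else 1) := by
  have := hμ.1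
  have hunion : {ω | ∀ y ∈ A, y ∈ ranE ω (departT B Bt k ω)} =
      ⋃ n, coverBetween B Bt A n k := by
    ext ω
    simp only [coverBetween, Set.mem_ofPred_eq, subset_ranE_iff_exists, Set.mem_iUnion]
  have hmono : Monotone fun n ↦ coverBetween B Bt A n k := fun n m hnm ω hω ↦
    hω.trans (visitedWithin_mono hnm le_rfl)
  rw [hunion]
  refine le_of_tendsto' ((ENNReal.tendsto_toReal (measure_ne_top _ _)).comp
    (tendsto_measure_iUnion_atTop hmono)) fun n ↦ ?_
  exact hw.real_coverBetween_le_ite hμ hBBt hAB n k x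

end IsExcursionWeight

end Excursions

section Newton

lemma exists_one_add_rpow_add_one_sub_rpow_le (p : ℝ) :
    ∃ C ≥ 0, ∀ᶠ x : ℝ in nhds 0,
      (1 + x) ^ p + (1 - x) ^ p ≤ 2 + p * (p - 1) * x ^ 2 + C * x ^ 4 := by
  have hchoose : (2 : ℝ) * Ring.choose p 2 = p * (p - 1) := by
    have h := (Ring.descPochhammer_eq_factorial_smul_choose p 2).symm
    simpa [descPochhammer, Polynomial.smeval_mul, Polynomial.smeval_sub] using h
  have hpartial (x : ℝ) : (binomialSeries ℝ p).partialSum 4 x =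
      1 + p * x + Ring.choose p 2 * x ^ 2 + Ring.choose p 3 * x ^ 3 := by
    simp [FormalMultilinearSeries.partialSum, Finset.sum_range_succ, binomialSeries, mul_comm]
  have hseries := (Real.one_add_rpow_hasFPowerSeriesAt_zero (a := p)).isBigO_sub_partialSum_pow 4
  obtain ⟨C, hC, hbound⟩ := hseries.exists_nonneg
  have hneg : Tendsto (fun x : ℝ ↦ -x) (nhds 0) (nhds 0) := by simpa using tendsto_neg (0 : ℝ)
  refine ⟨2 * C, by positivity, ?_⟩
  filter_upwards [hbound.bound, hneg.eventually hbound.bound] with x hx hx'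
  simp only [zero_add, hpartial, Real.norm_eq_abs, abs_pow, abs_neg, abs_le,
    (by decide : Even 4).pow_abs] at hx hx'
  rw [← sub_eq_add_neg] at hx'
  rw [← hchoose]
  linarith [hx.2, hx'.2]

lemma exists_sum_one_add_rpow_le (p : ℝ) (κ : Type*) [Fintype κ] :
    ∃ C ≥ 0, ∃ δ > 0, ∀ x : κ → ℝ, ∑ k, x k ^ 2 < δ →
      ∑ k, ((1 + x k) ^ p + (1 - x k) ^ p) ≤
        2 * Fintype.card κ + p * (p - 1) * ∑ k, x k ^ 2 + C * (∑ k, x k ^ 2) ^ 2 := by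
  obtain ⟨C, hC, hpair⟩ := exists_one_add_rpow_add_one_sub_rpow_le p
  obtain ⟨ε, hε, hpair⟩ := Metric.eventually_nhds_iff.1 hpair
  refine ⟨C, hC, ε ^ 2, by positivity, fun x hx ↦ ?_⟩
  have hsq (k : κ) : x k ^ 2 ≤ ∑ k, x k ^ 2 :=
    Finset.single_le_sum (f := fun k ↦ x k ^ 2) (fun k _ ↦ sq_nonneg _) (Finset.mem_univ k)
  have hfourth : ∑ k, x k ^ 4 ≤ (∑ k, x k ^ 2) ^ 2 := by
    rw [sq, Finset.sum_mul]
    gcongr with k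
    nlinarith [hsq k, sq_nonneg (x k)]
  calc ∑ k, ((1 + x k) ^ p + (1 - x k) ^ p)
      ≤ ∑ k, (2 + p * (p - 1) * x k ^ 2 + C * x k ^ 4) := by
        refine Finset.sum_le_sum fun k _ ↦ hpair ?_
        rw [Real.dist_0_eq_abs]
        exact abs_lt_of_sq_lt_sq ((hsq k).trans_lt hx) hε.le
    _ = 2 * Fintype.card κ + p * (p - 1) * ∑ k, x k ^ 2 + C * ∑ k, x k ^ 4 := by
        simp [Finset.sum_add_distrib, Finset.mul_sum, mul_comm]
    _ ≤ _ := by gcongr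

lemma rpow_mul_one_add_le_rpow_of_nonpos {p x y : ℝ} (hp : p ≤ 0) (hx : 0 < x) (hy : 0 < y) :
    x ^ p * (1 + p * ((y - x) / x)) ≤ y ^ p := by
  have hyx : 0 < y / x := by positivity
  calc x ^ p * (1 + p * ((y - x) / x))
      ≤ x ^ p * (Real.log (y / x) * p + 1) := by
        have hlog : Real.log (y / x) ≤ (y - x) / x := by
          rw [sub_div, div_self hx.ne']
          exact Real.log_le_sub_one_of_pos hyx
        refine mul_le_mul_of_nonneg_left ?_ (by positivity)
        linarith [mul_le_mul_of_nonpos_right hlog hp]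
    _ ≤ x ^ p * (y / x) ^ p := by
        rw [Real.rpow_def_of_pos hyx]
        gcongr
        exact Real.add_one_le_exp _
    _ = y ^ p := by rw [← Real.mul_rpow hx.le hyx.le, mul_div_cancel₀ y hx.ne']

variable {κ : Type*} [Fintype κ] [DecidableEq κ]

/-- The discrete analogue `(|z|² + a)^{-(ν - 2) / 2}` of the Newton potential `|z|^{2 - ν}` in
dimension `ν`. The shift `a` will be large enough to make it superharmonic. -/
noncomputable def newton (a : ℝ) (z : κ → ℤ) : ℝ :=
  (∑ k, (z k : ℝ) ^ 2 + a) ^ (-((Fintype.card κ - 2) / 2) : ℝ)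

lemma sum_sq_add_single (z : κ → ℤ) (k : κ) (c : ℤ) :
    ∑ l, (((z + Pi.single k c : κ → ℤ) l : ℤ) : ℝ) ^ 2 =
      ∑ l, (z l : ℝ) ^ 2 + 2 * c * z k + c ^ 2 := by
  have hl (l : κ) : (((z + Pi.single k c : κ → ℤ) l : ℤ) : ℝ) ^ 2 =
      (z l : ℝ) ^ 2 + if l = k then 2 * c * z k + (c : ℝ) ^ 2 else 0 := by
    split_ifs with h
    · subst h
      simp
      ring
    · simp [h]
  simp only [hl, Finset.sum_add_distrib, Finset.sum_ite_eq', Finset.mem_univ, if_true, add_assoc]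

lemma newton_add_single {a : ℝ} (ha : 0 ≤ a) {z : κ → ℤ} {S : ℝ}
    (hS : S = ∑ k, (z k : ℝ) ^ 2 + a + 1) (k : κ) {c : ℤ} (hc : c ^ 2 = 1) :
    newton a (z + Pi.single k c) = S ^ (-((Fintype.card κ - 2) / 2) : ℝ) *
      (1 + c * (2 * z k / S)) ^ (-((Fintype.card κ - 2) / 2) : ℝ) := by
  have hcR : (c : ℝ) ^ 2 = 1 := mod_cast hc
  have hk : (z k : ℝ) ^ 2 ≤ ∑ l, (z l : ℝ) ^ 2 :=
    Finset.single_le_sum (f := fun l ↦ (z l : ℝ) ^ 2) (fun l _ ↦ sq_nonneg _) (Finset.mem_univ k)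
  have hS0 : 0 < S := by nlinarith
  have hbase : 0 ≤ S + c * (2 * z k) := by nlinarith [sq_nonneg (c + z k : ℝ)]
  have hfactor : ∑ l, (z l : ℝ) ^ 2 + 2 * c * z k + c ^ 2 + a = S * (1 + c * (2 * z k / S)) := by
    field_simp
    linarith
  have hfactor' : S * (1 + c * (2 * z k / S)) = S + c * (2 * z k) := by field_simp
  rw [newton, sum_sq_add_single, hfactor,
    Real.mul_rpow hS0.le (nonneg_of_mul_nonneg_right (hfactor' ▸ hbase) hS0)]

/-- The parameter `a` absorbs the fourth-order Taylor remainder. -/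
lemma exists_sum_one_add_rpow_le_of_sum_sq_eq {p : ℝ} (hp : 0 < p * (p - 1)) (κ : Type*)
    [Fintype κ] :
    ∃ a ≥ 1, ∀ q S : ℝ, 0 ≤ q → S = q + a + 1 → ∀ x : κ → ℝ, ∑ k, x k ^ 2 = 4 * q / S ^ 2 →
      ∑ k, ((1 + x k) ^ p + (1 - x k) ^ p) ≤ 2 * Fintype.card κ + 4 * (p * (p - 1)) / S := by
  obtain ⟨C, hC, δ, hδ, hsum⟩ := exists_sum_one_add_rpow_le p κ
  obtain ⟨a, haδ, haC, ha1⟩ : ∃ a, 4 / δ ≤ a ∧ 4 * C / (p * (p - 1)) ≤ a ∧ 1 ≤ a :=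
    ⟨max (4 / δ) (max (4 * C / (p * (p - 1))) 1), by simp, by simp, by simp⟩
  rw [div_le_iff₀ (by positivity)] at haδ haC
  refine ⟨a, ha1, fun q S hq hS x hx ↦ ?_⟩
  have hS0 : 0 < S := by linarith
  have hsmall : 4 * q / S ^ 2 < δ := by
    rw [div_lt_iff₀ (by positivity)]
    nlinarith
  have hremainder : p * (p - 1) * (4 * q / S ^ 2) + C * (4 * q / S ^ 2) ^ 2 ≤
      4 * (p * (p - 1)) / S := by
    have hqS : q ^ 2 / S ^ 2 ≤ 1 := div_le_one_of_le₀ (by gcongr; linarith) (by positivity)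
    calc p * (p - 1) * (4 * q / S ^ 2) + C * (4 * q / S ^ 2) ^ 2
        = (4 * (p * (p - 1)) * q + 16 * C * (q ^ 2 / S ^ 2)) / S ^ 2 := by ring
      _ ≤ 4 * (p * (p - 1)) * S / S ^ 2 := by
        gcongr
        nlinarith [mul_le_mul_of_nonneg_left hqS hC]
      _ = 4 * (p * (p - 1)) / S := by field_simp
  have hmain := hsum x (hx ▸ hsmall)
  rw [hx] at hmain
  linarith

lemma exists_stepAvg_newton_le (hκ : 3 ≤ Fintype.card κ) :
    ∃ a ≥ 1, ∀ z : κ → ℤ, stepAvg unitVec (newton a) z ≤ newton a z := by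
  obtain ⟨p, hp_def⟩ : ∃ p : ℝ, p = -((Fintype.card κ - 2) / 2) := ⟨_, rfl⟩
  have hcard : (Fintype.card κ : ℝ) = 2 - 2 * p := by rw [hp_def]; ring
  have hp : p < 0 := by
    have : (3 : ℝ) ≤ Fintype.card κ := mod_cast hκ
    linarith
  have : Nonempty κ := Fintype.card_pos_iff.1 (by lia)
  obtain ⟨a, ha, hsum⟩ := exists_sum_one_add_rpow_le_of_sum_sq_eq (p := p) (by nlinarith) κ
  refine ⟨a, ha, fun z ↦ ?_⟩
  obtain ⟨q, hq⟩ : ∃ q, q = ∑ k, (z k : ℝ) ^ 2 := ⟨_, rfl⟩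
  obtain ⟨S, hS⟩ : ∃ S, S = q + a + 1 := ⟨_, rfl⟩
  have hq0 : 0 ≤ q := hq ▸ by positivity
  have hx2 : ∑ k, (2 * z k / S : ℝ) ^ 2 = 4 * q / S ^ 2 := by
    simp only [div_pow, mul_pow, ← Finset.sum_div, ← Finset.mul_sum, hq]
    norm_num
  have hS0 : 0 < S := by linarith
  have hneighbours := calc
    ∑ k, (newton a (z + Pi.single k 1) + newton a (z + Pi.single k (-1)))
      = S ^ p * ∑ k, ((1 + 2 * z k / S) ^ p + (1 - 2 * z k / S) ^ p) := by
        rw [Finset.mul_sum]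
        refine Finset.sum_congr rfl fun k _ ↦ ?_
        rw [newton_add_single (by linarith) (hq ▸ hS) k (one_pow 2),
          newton_add_single (by linarith) (hq ▸ hS) k neg_one_sq, ← hp_def]
        push_cast
        ring_nf
    _ ≤ S ^ p * (2 * Fintype.card κ * (1 + p * ((S - 1 - S) / S))) := by
        gcongr
        refine (hsum q S hq0 hS _ hx2).trans_eq ?_
        rw [hcard]
        ring
    _ ≤ 2 * Fintype.card κ * newton a z := by
        rw [mul_left_comm, newton, ← hq, ← hp_def, show q + a = S - 1 by linarith]
        gcongr
        exact rpow_mul_one_add_le_rpow_of_nonpos hp.le hS0 (by linarith)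
  rw [← sub_nonpos, stepAvg_unitVec_sub, Finset.sum_sub_distrib]
  refine div_nonpos_of_nonpos_of_nonneg ?_ (by positivity)
  simp only [Finset.sum_const, Finset.card_univ, nsmul_eq_mul]
  linarith

end Newton

section Representative

variable {d N : ℕ}

lemma abs_valMinAbs_le [NeZero N] (b : ZMod N) : 2 * |b.valMinAbs| ≤ N := by
  have := b.natAbs_valMinAbs_le
  rw [Int.abs_eq_natAbs]
  lia

lemma abs_valMinAbs_intCast_le [NeZero N] (s : ℤ) : |(s : ZMod N).valMinAbs| ≤ |s| := by
  have := ZMod.natAbs_min_of_le_div_two N _ _ (ZMod.coe_valMinAbs (s : ZMod N))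
    (ZMod.natAbs_valMinAbs_le _)
  rw [Int.abs_eq_natAbs, Int.abs_eq_natAbs]
  exact_mod_cast this

lemma valMinAbs_intCast_eq_or (s : ℤ) :
    (s : ZMod N).valMinAbs = s ∨ (N : ℤ) ≤ |(s : ZMod N).valMinAbs| + |s| := by
  have hdvd : (N : ℤ) ∣ (s : ZMod N).valMinAbs - s :=
    (ZMod.intCast_eq_intCast_iff_dvd_sub _ _ _).1 (ZMod.coe_valMinAbs (s : ZMod N)).symm
  refine or_iff_not_imp_left.2 fun hne ↦ ?_
  have := Int.le_of_dvd (abs_pos.2 (sub_ne_zero.2 hne)) ((dvd_abs _ _).2 hdvd)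
  exact this.trans (abs_sub _ _)

/-- The lift of a point of the cylinder to `ℤ^{d+1}` with horizontal coordinates in
`(-N/2, N/2]`. -/
def rep (d N : ℕ) (w : Cyl d N) : Lat d :=
  Fin.snoc (α := fun _ ↦ ℤ) (fun i ↦ (w.1 i).valMinAbs) w.2

@[simp] lemma rep_last (w : Cyl d N) : rep d N w (Fin.last d) = w.2 := by simp [rep]

@[simp] lemma rep_castSucc (w : Cyl d N) (i : Fin d) :
    rep d N w i.castSucc = (w.1 i).valMinAbs := by simp [rep]

lemma projE_add (y z : Lat d) : projE d N (y + z) = projE d N y + projE d N z := by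
  ext <;> simp [projE]

lemma projE_rep (w : Cyl d N) : projE d N (rep d N w) = w := by
  ext <;> simp [projE]

lemma stepAvg_cylStep (f : Cyl d N → ℝ) (w : Cyl d N) :
    stepAvg (cylStep d N) f w = stepAvg unitVec (fun z ↦ f (projE d N z)) (rep d N w) := by
  simp [stepAvg, projE_add, projE_rep, cylStep]

lemma abs_rep_projE_le [NeZero N] (z : Lat d) (k : Fin (d + 1)) :
    |rep d N (projE d N z) k| ≤ |z k| := by
  induction k using Fin.lastCases with
  | last => simp [projE]
  | cast i => simpa [projE] using abs_valMinAbs_intCast_le (z i.castSucc)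

lemma rep_projE_eq_or (z : Lat d) (k : Fin (d + 1)) :
    rep d N (projE d N z) k = z k ∨ (N : ℤ) ≤ |rep d N (projE d N z) k| + |z k| := by
  induction k using Fin.lastCases with
  | last => simp [projE]
  | cast i => simpa [projE] using valMinAbs_intCast_eq_or (z i.castSucc)

end Representative

section Barrier

variable {κ : Type*} [Fintype κ]

lemma rpow_neg_sub_rpow_neg_le {α r x y : ℝ} (hα : 0 ≤ α) (hr : 0 < r) (hrx : r ≤ x)
    (hxy : x ≤ y) : x ^ (-α) - y ^ (-α) ≤ α * r ^ (-α - 1) * (y - x) := by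
  have hx : 0 < x := hr.trans_le hrx
  have htangent := rpow_mul_one_add_le_rpow_of_nonpos (neg_nonpos.2 hα) hx (hx.trans_le hxy)
  calc
    x ^ (-α) - y ^ (-α) ≤ α * x ^ (-α - 1) * (y - x) := by
      rw [Real.rpow_sub_one hx.ne']
      linear_combination htangent
    _ ≤ α * r ^ (-α - 1) * (y - x) := by
      refine mul_le_mul_of_nonneg_right (mul_le_mul_of_nonneg_left ?_ hα) (by linarith)
      exact Real.rpow_le_rpow_of_nonpos hr hrx (by linarith)

lemma newton_sub_newton_le (hκ : 2 ≤ Fintype.card κ) {a R : ℝ} (ha : 0 ≤ a) (hR : 0 < R)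
    {z z' : κ → ℤ} (hle : ∀ k, |z' k| ≤ |z k|) (hfar : ∀ k, z' k ≠ z k → R ≤ |(z' k : ℝ)|) :
    newton a z' - newton a z ≤
      (Fintype.card κ - 2) / 2 * (1 / R) ^ Fintype.card κ *
        ∑ k, ((z k : ℝ) ^ 2 - (z' k : ℝ) ^ 2) := by
  have hα : (0 : ℝ) ≤ (Fintype.card κ - 2) / 2 := by
    have : (2 : ℝ) ≤ Fintype.card κ := mod_cast hκ
    linarith
  by_cases heq : z' = z
  · simp [heq]
  obtain ⟨k, hk⟩ := Function.ne_iff.1 heq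
  have hR2 : R ^ 2 ≤ ∑ k, (z' k : ℝ) ^ 2 + a := calc
    R ^ 2 ≤ |(z' k : ℝ)| ^ 2 := by gcongr; exact hfar k hk
    _ = (z' k : ℝ) ^ 2 := sq_abs _
    _ ≤ ∑ k, (z' k : ℝ) ^ 2 :=
      Finset.single_le_sum (f := fun k ↦ (z' k : ℝ) ^ 2) (fun _ _ ↦ sq_nonneg _)
        (Finset.mem_univ k)
    _ ≤ _ := by linarith
  have hle2 : ∑ k, (z' k : ℝ) ^ 2 + a ≤ ∑ k, (z k : ℝ) ^ 2 + a :=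
    add_le_add_left (Finset.sum_le_sum fun k _ ↦ sq_le_sq.2 (mod_cast hle k)) a
  have hpow : (R ^ 2) ^ (-(((Fintype.card κ : ℝ) - 2) / 2) - 1) = (1 / R) ^ Fintype.card κ := by
    rw [← Real.rpow_natCast R 2, ← Real.rpow_mul hR.le, ← Real.rpow_natCast, one_div,
      Real.inv_rpow hR.le, ← Real.rpow_neg hR.le]
    congr 1
    push_cast
    ring
  refine (rpow_neg_sub_rpow_neg_le hα (by positivity) hR2 hle2).trans_eq ?_
  rw [hpow, Finset.sum_sub_distrib]
  ring

/-- The harmonic quadratic form `x₁² + ⋯ + x_d² - d x_{d+1}²`. -/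
def saddle {d : ℕ} (z : Lat d) : ℝ :=
  ∑ i : Fin d, (z i.castSucc : ℝ) ^ 2 - d * (z (Fin.last d) : ℝ) ^ 2

lemma stepAvg_saddle {d : ℕ} (z : Lat d) : stepAvg unitVec saddle z = saddle z := by
  have hlast (σ : ℤ) : saddle (z + (Pi.single (Fin.last d) σ : Lat d)) =
      saddle z - d * (2 * σ * z (Fin.last d) + σ ^ 2) := by
    simp [saddle]
    ring
  have hcast (i : Fin d) (σ : ℤ) : saddle (z + (Pi.single i.castSucc σ : Lat d)) =
      saddle z + (2 * σ * z i.castSucc + σ ^ 2) := by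
    have := sum_sq_add_single (fun i : Fin d ↦ z i.castSucc) i σ
    simp only [saddle, Pi.add_apply, Pi.single_apply, Fin.castSucc_inj] at this ⊢
    rw [this, if_neg (Fin.castSucc_ne_last i).symm]
    push_cast
    ring
  rw [← sub_eq_zero, stepAvg_unitVec_sub, Fin.sum_univ_castSucc]
  refine div_eq_zero_iff.2 (.inl ?_)
  simp only [hlast, hcast]
  push_cast
  ring_nf
  simp

lemma saddle_add_le {d N : ℕ} [NeZero N] (w : Cyl d N) :
    saddle (rep d N w) + 9 * d * N ^ 2 ≤ 10 * d * N ^ 2 := by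
  have hsum : ∑ i : Fin d, (rep d N w i.castSucc : ℝ) ^ 2 ≤ ∑ i : Fin d, (N : ℝ) ^ 2 := by
    refine Finset.sum_le_sum fun i _ ↦ sq_le_sq.2 ?_
    rw [rep_castSucc, Nat.abs_cast]
    have := abs_valMinAbs_le (w.1 i)
    exact_mod_cast (by lia : |(w.1 i).valMinAbs| ≤ N)
  rw [Finset.sum_const, Finset.card_univ, Fintype.card_fin, nsmul_eq_mul] at hsum
  have : 0 ≤ d * (rep d N w (Fin.last d) : ℝ) ^ 2 := by positivity
  rw [saddle]
  linarith

lemma saddle_add_nonneg {d N : ℕ} {w : Cyl d N} (hw : |w.2| ≤ 3 * N) :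
    0 ≤ saddle (rep d N w) + 9 * d * N ^ 2 := by
  have hw2 : (w.2 : ℝ) ^ 2 ≤ (3 * N) ^ 2 := by
    refine sq_le_sq.2 ?_
    rw [abs_of_nonneg (by positivity : (0 : ℝ) ≤ 3 * N)]
    exact_mod_cast hw
  have : (0 : ℝ) ≤ ∑ i : Fin d, (rep d N w i.castSucc : ℝ) ^ 2 := by positivity
  rw [saddle, rep_last]
  linear_combination this + (d : ℝ) * hw2

variable {d N : ℕ}

/-- The function on `ℤ^{d+1}` whose restriction to the lifts `rep d N w` is superharmonic on the
cylinder. Where the lift jumps, the Newton kernel of the coordinates `emb` alone fails to be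
superharmonic by at most `O(N^{-card κ})` times the change of `saddle`, whence the coefficient. The
constant `9 d N²` makes the quadratic part nonnegative up to height `3 N`. -/
noncomputable def barrier (N : ℕ) (emb : κ ↪ Fin (d + 1)) (a : ℝ) (z : Lat d) : ℝ :=
  newton a (z ∘ emb) + (Fintype.card κ - 2) / 2 * (1 / (N / 4 : ℝ)) ^ Fintype.card κ *
    (saddle z + 9 * d * N ^ 2)

lemma barrier_le_barrier (hκ : 2 ≤ Fintype.card κ) [NeZero N] (emb : κ ↪ Fin (d + 1)) {a : ℝ}
    (ha : 0 ≤ a) {z z' : Lat d} (hlast : z' (Fin.last d) = z (Fin.last d))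
    (hle : ∀ k, |z' k| ≤ |z k|) (hfar : ∀ k, z' k ≠ z k → (N : ℤ) ≤ 4 * |z' k|) :
    barrier N emb a z' ≤ barrier N emb a z := by
  have hN : (0 : ℝ) < N := Nat.cast_pos.2 (NeZero.pos N)
  have hc : 0 ≤ ((Fintype.card κ : ℝ) - 2) / 2 * (1 / (N / 4 : ℝ)) ^ Fintype.card κ := by
    have : (2 : ℝ) ≤ Fintype.card κ := mod_cast hκ
    exact mul_nonneg (by linarith) (by positivity)
  have hnewton := newton_sub_newton_le hκ ha (by positivity : 0 < (N / 4 : ℝ))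
    (z := z ∘ emb) (z' := z' ∘ emb) (fun k ↦ hle (emb k)) fun k hk ↦ by
      have : (N : ℝ) ≤ 4 * |(z' (emb k) : ℝ)| := mod_cast hfar _ hk
      exact (by linarith : (N / 4 : ℝ) ≤ |(z' (emb k) : ℝ)|)
  have hsaddle : ∑ k : κ, ((z (emb k) : ℝ) ^ 2 - (z' (emb k) : ℝ) ^ 2) ≤
      saddle z - saddle z' := calc
    _ ≤ ∑ k, ((z k : ℝ) ^ 2 - (z' k : ℝ) ^ 2) := by
      rw [← Finset.sum_map Finset.univ emb fun k ↦ (z k : ℝ) ^ 2 - (z' k : ℝ) ^ 2]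
      exact Finset.sum_le_univ_sum_of_nonneg fun k ↦ sub_nonneg.2 (sq_le_sq.2 (mod_cast hle k))
    _ = saddle z - saddle z' := by
      rw [Fin.sum_univ_castSucc, Finset.sum_sub_distrib, hlast, saddle, saddle, hlast]
      ring
  have := mul_le_mul_of_nonneg_left hsaddle hc
  simp only [barrier, Function.comp_apply] at hnewton ⊢
  linarith

lemma stepAvg_barrier_rep_le (hκ : 2 ≤ Fintype.card κ) (hN : 4 ≤ N) (emb : κ ↪ Fin (d + 1))
    {a : ℝ} (ha : 0 ≤ a) (hnewton : ∀ z : κ → ℤ, stepAvg unitVec (newton a) z ≤ newton a z)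
    (w : Cyl d N) :
    stepAvg (cylStep d N) (fun w ↦ barrier N emb a (rep d N w)) w ≤
      barrier N emb a (rep d N w) := by
  have : NeZero N := ⟨by lia⟩
  have : Nonempty κ := Fintype.card_pos_iff.1 (by lia)
  rw [stepAvg_cylStep]
  refine (stepAvg_mono (g := barrier N emb a) fun s ↦ ?_).trans ?_
  · refine barrier_le_barrier hκ emb ha (by simp [projE]) (fun k ↦ abs_rep_projE_le _ k)
      fun k hk ↦ ?_
    have hwrap := (rep_projE_eq_or (N := N) (rep d N w + unitVec s) k).resolve_left hk
    have hstep := (abs_add_le (rep d N w k) (unitVec s k)).trans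
      (add_le_add_right (abs_unitVec_le_one s k) _)
    have hrep : 2 * |rep d N w k| ≤ N := by
      induction k using Fin.lastCases with
      | last => simp [projE] at hk
      | cast i => simpa using abs_valMinAbs_le (w.1 i)
    rw [Pi.add_apply] at hwrap
    lia
  · unfold barrier
    simp only [stepAvg_add, stepAvg_const_mul, stepAvg_saddle, stepAvg_const]
    gcongr
    rw [← sub_nonpos, stepAvg_unitVec_comp_sub]
    exact mul_nonpos_of_nonneg_of_nonpos (by positivity) (sub_nonpos.2 (hnewton _))

end Barrier

section IsBarrier

variable {κ : Type*} [Fintype κ]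

lemma newton_nonneg {a : ℝ} (ha : 0 ≤ a) (z : κ → ℤ) : 0 ≤ newton a z :=
  Real.rpow_nonneg (by positivity) _

lemma newton_le_one (hκ : 2 ≤ Fintype.card κ) {a : ℝ} (ha : 1 ≤ a) (z : κ → ℤ) :
    newton a z ≤ 1 := by
  have hcard : (2 : ℝ) ≤ Fintype.card κ := mod_cast hκ
  have hsum : (0 : ℝ) ≤ ∑ k, (z k : ℝ) ^ 2 := by positivity
  exact Real.rpow_le_one_of_one_le_of_nonpos (by linarith) (by linarith)

lemma newton_le_one_div_pow (hκ : 2 ≤ Fintype.card κ) {a t : ℝ} (ha : 0 ≤ a) (ht : 0 < t)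
    {z : κ → ℤ} {k : κ} (hk : t ≤ |(z k : ℝ)|) : newton a z ≤ 1 / t ^ (Fintype.card κ - 2) := by
  have hcard : (2 : ℝ) ≤ Fintype.card κ := mod_cast hκ
  have ht2 : t ^ 2 ≤ ∑ k, (z k : ℝ) ^ 2 + a := calc
    t ^ 2 ≤ |(z k : ℝ)| ^ 2 := by gcongr
    _ = (z k : ℝ) ^ 2 := sq_abs _
    _ ≤ ∑ k, (z k : ℝ) ^ 2 :=
      Finset.single_le_sum (f := fun k ↦ (z k : ℝ) ^ 2) (fun _ _ ↦ sq_nonneg _)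
        (Finset.mem_univ k)
    _ ≤ _ := by linarith
  refine (Real.rpow_le_rpow_of_nonpos (by positivity) ht2 (by linarith)).trans_eq ?_
  rw [← Real.rpow_natCast t 2, ← Real.rpow_mul ht.le, ← Real.rpow_natCast, one_div,
    ← Real.rpow_neg ht.le, Nat.cast_sub hκ]
  congr 1
  push_cast
  ring

variable {d N : ℕ}

lemma barrier_rep_le (hκ : 2 ≤ Fintype.card κ) [NeZero N] (emb : κ ↪ Fin (d + 1)) (a : ℝ)
    (w : Cyl d N) : barrier N emb a (rep d N w) ≤ newton a (rep d N w ∘ emb) +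
      5 * d * (Fintype.card κ - 2) * 4 ^ Fintype.card κ / N ^ (Fintype.card κ - 2) := by
  obtain ⟨n, hn⟩ := Nat.exists_eq_add_of_le' hκ
  have hN : (N : ℝ) ≠ 0 := NeZero.ne _
  rw [barrier, hn, Nat.add_sub_cancel, Nat.cast_add, Nat.cast_two, add_sub_cancel_right]
  gcongr
  calc (n : ℝ) / 2 * (1 / (N / 4)) ^ (n + 2) * (saddle (rep d N w) + 9 * d * N ^ 2)
    _ ≤ n / 2 * (1 / (N / 4)) ^ (n + 2) * (10 * d * N ^ 2) := by
      gcongr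
      exact saddle_add_le w
    _ = _ := by
      rw [one_div_div, div_pow, pow_add (N : ℝ)]
      field_simp
      ring

/-- `b` is a superharmonic function on the cylinder which, up to height `3 N`, dominates the
probability of ever hitting the set of points whose coordinates `emb` vanish, and which decays with
the distance to this set. -/
structure IsBarrier (emb : κ ↪ Fin (d + 1)) (C : ℝ) (b : Cyl d N → ℝ) : Prop where
  stepAvg_le : ∀ w, stepAvg (cylStep d N) b w ≤ b w
  nonneg : ∀ w : Cyl d N, |w.2| ≤ 3 * N → 0 ≤ b w
  one_le : ∀ w : Cyl d N, |w.2| ≤ 3 * N → rep d N w ∘ emb = 0 → 1 ≤ b w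
  le_const : ∀ w, b w ≤ C
  le_div_pow : ∀ w k, ∀ t : ℝ, 0 < t → t ≤ N → t ≤ |(rep d N w (emb k) : ℝ)| →
    b w ≤ C / t ^ (Fintype.card κ - 2)

lemma isBarrier_barrier (hκ : 2 ≤ Fintype.card κ) (hN : 4 ≤ N) (emb : κ ↪ Fin (d + 1)) {a : ℝ}
    (ha : 1 ≤ a) (hnewton : ∀ z : κ → ℤ, stepAvg unitVec (newton a) z ≤ newton a z) :
    IsBarrier emb (a ^ (((Fintype.card κ : ℝ) - 2) / 2) *
        (1 + 5 * d * (Fintype.card κ - 2) * 4 ^ Fintype.card κ))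
      fun w : Cyl d N ↦ a ^ (((Fintype.card κ : ℝ) - 2) / 2) * barrier N emb a (rep d N w) := by
  have : NeZero N := ⟨by lia⟩
  have ha0 : 0 < a := by linarith
  have hcard : (0 : ℝ) ≤ Fintype.card κ - 2 := sub_nonneg.2 (mod_cast hκ)
  have hquad (w : Cyl d N) (hw : |w.2| ≤ 3 * N) := mul_nonneg
    (by positivity : 0 ≤ ((Fintype.card κ : ℝ) - 2) / 2 * (1 / (N / 4 : ℝ)) ^ Fintype.card κ)
    (saddle_add_nonneg hw)
  have hpow (t : ℝ) (ht : 0 < t) (htN : t ≤ N) (w : Cyl d N)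
      (hle : newton a (rep d N w ∘ emb) ≤ 1 / t ^ (Fintype.card κ - 2)) :
      barrier N emb a (rep d N w) ≤
        (1 + 5 * d * (Fintype.card κ - 2) * 4 ^ Fintype.card κ) / t ^ (Fintype.card κ - 2) := by
    refine (barrier_rep_le hκ emb a w).trans ?_
    rw [add_div]
    gcongr
  constructor
  · intro w
    rw [stepAvg_const_mul]
    gcongr
    exact stepAvg_barrier_rep_le hκ hN emb ha0.le hnewton w
  · intro w hw
    exact mul_nonneg (by positivity) (add_nonneg (newton_nonneg ha0.le _) (hquad w hw))
  · intro w hw h0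
    have hzero : a ^ (((Fintype.card κ : ℝ) - 2) / 2) * newton a (rep d N w ∘ emb) = 1 := by
      rw [h0, newton, Real.rpow_neg (by positivity)]
      simp [(Real.rpow_pos_of_pos ha0 _).ne']
    rw [barrier, mul_add, hzero]
    exact le_add_of_nonneg_right (mul_nonneg (by positivity) (hquad w hw))
  · intro w
    gcongr
    simpa using hpow 1 one_pos (by exact_mod_cast (by lia : 1 ≤ N)) w
      (by simpa using newton_le_one hκ ha _)
  · intro w k t ht htN htk
    rw [mul_div_assoc]
    gcongr
    exact hpow t ht htN w (newton_le_one_div_pow hκ ha0.le ht htk)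

lemma exists_isBarrier (d : ℕ) (hκ : 3 ≤ Fintype.card κ) :
    ∃ C : ℝ, 0 < C ∧ ∀ N, 4 ≤ N → ∀ emb : κ ↪ Fin (d + 1), ∃ b : Cyl d N → ℝ,
      IsBarrier emb C b := by
  obtain ⟨a, ha, hnewton⟩ := exists_stepAvg_newton_le hκ
  have hcard : (0 : ℝ) ≤ Fintype.card κ - 2 := sub_nonneg.2 (mod_cast (by lia : 2 ≤ _))
  exact ⟨_, by positivity, fun N hN emb ↦ ⟨_, isBarrier_barrier (by lia) hN emb ha hnewton⟩⟩

end IsBarrier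

section HittingMajorant

variable {κ : Type*} [Fintype κ] {d N : ℕ}

lemma stepAvg_comp_rep_sub [DecidableEq κ] [Nonempty κ] (emb : κ ↪ Fin (d + 1))
    (f : (κ → ℤ) → ℝ) {w : Cyl d N} (hw : ∀ k, 2 * (|rep d N w (emb k)| + 1) < N) :
    stepAvg (cylStep d N) (fun y ↦ f (rep d N y ∘ emb)) w - f (rep d N w ∘ emb) =
      Fintype.card κ / (d + 1) *
        (stepAvg unitVec f (rep d N w ∘ emb) - f (rep d N w ∘ emb)) := by
  have : NeZero N := ⟨by
    have := hw (Classical.arbitrary κ)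
    have := abs_nonneg (rep d N w (emb (Classical.arbitrary κ)))
    lia⟩
  have hrep (s : Fin (d + 1) × ℤˣ) :
      rep d N (projE d N (rep d N w + unitVec s)) ∘ emb = (rep d N w + unitVec s) ∘ emb := by
    ext k
    refine (rep_projE_eq_or (rep d N w + unitVec s) (emb k)).resolve_right fun hwrap ↦ ?_
    have hle := abs_rep_projE_le (N := N) (rep d N w + unitVec s) (emb k)
    have hstep := (abs_add_le (rep d N w (emb k)) (unitVec s (emb k))).trans
      (add_le_add_right (abs_unitVec_le_one s (emb k)) _)
    have := hw k
    rw [Pi.add_apply] at hwrap hle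
    lia
  rw [stepAvg_cylStep, stepAvg]
  simp only [hrep]
  simpa [stepAvg] using stepAvg_unitVec_comp_sub emb f (rep d N w)

lemma IsBarrier.stepAvg_min_hitProb_le [DecidableEq κ] [Nonempty κ] {emb : κ ↪ Fin (d + 1)}
    {C ε : ℝ} {b : Cyl d N → ℝ} (hb : IsBarrier emb C b) {μ : (κ → ℤ) → Measure (ℕ → κ → ℤ)}
    (hμ : IsMarkovFamily (walkKernel unitVec) μ) {r : ℕ} (hr : 0 < r) (hrN : 2 * r < N)
    (hrε : C / r ^ (Fintype.card κ - 2) ≤ ε) (w : Cyl d N) :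
    stepAvg (cylStep d N) (fun y ↦ min (hitProb μ (rep d N y ∘ emb) + ε) (b y)) w ≤
      min (hitProb μ (rep d N w ∘ emb) + ε) (b w) := by
  refine stepAvg_min_le (hb.stepAvg_le w) ?_
  by_cases! hnear : ∀ k, |rep d N w (emb k)| < r
  · refine .inl ?_
    rw [stepAvg_add (f := fun y ↦ hitProb μ (rep d N y ∘ emb)), stepAvg_const]
    gcongr
    rw [← sub_nonpos, stepAvg_comp_rep_sub _ _ fun k ↦ by have := hnear k; lia]
    exact mul_nonpos_of_nonneg_of_nonpos (by positivity)
      (sub_nonpos.2 (stepAvg_hitProb_le hμ _))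
  · obtain ⟨k, hk⟩ := hnear
    have hhit : 0 ≤ hitProb μ (rep d N w ∘ emb) := measureReal_nonneg
    exact .inr <| (hb.le_div_pow w k r (mod_cast hr) (mod_cast by lia) (mod_cast hk)).trans
      (by linarith)

lemma card_le_of_abs_snd_sub_le [NeZero N] {T : Finset (Cyl d N)} {h : ℤ} {t : ℕ}
    (hT : ∀ y ∈ T, |y.2 - h| ≤ t) : (T.card : ℝ) ≤ N ^ d * (2 * t + 1) := by
  have hsub : T ⊆ Finset.univ ×ˢ Finset.Icc (h - t) (h + t) := fun y hy ↦ by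
    have := abs_le.1 (hT y hy)
    simp only [Finset.mem_product, Finset.mem_univ, true_and, Finset.mem_Icc]
    lia
  have hcard : (Finset.Icc (h - t) (h + t)).card = 2 * t + 1 := by
    rw [Int.card_Icc]
    lia
  have := Finset.card_le_card hsub
  rw [Finset.card_product, hcard, Finset.card_univ, Fintype.card_fun, ZMod.card,
    Fintype.card_fin] at this
  exact_mod_cast this

lemma sum_comp_sub_le [NeZero N] {b : Cyl d N → ℝ} {C δ : ℝ} {t : ℕ} (hC : 0 ≤ C) (hδ : 0 ≤ δ)
    (hbC : ∀ w, b w ≤ C) (hbδ : ∀ w : Cyl d N, t ≤ |w.2| → b w ≤ δ) {T : Finset (Cyl d N)}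
    (hT : ∀ y ∈ T, |y.2| ≤ N) (x : Cyl d N) :
    ∑ y ∈ T, b (y - x) ≤ N ^ d * (C * (2 * t + 1) + δ * (2 * N + 1)) := by
  have hb (w : Cyl d N) : b w ≤ (if |w.2| ≤ t then C else 0) + δ := by
    split_ifs with hw
    · linarith [hbC w]
    · linarith [hbδ w (by lia)]
  have hnear : ((T.filter fun y ↦ |(y - x).2| ≤ t).card : ℝ) ≤ N ^ d * (2 * t + 1) :=
    card_le_of_abs_snd_sub_le fun y hy ↦ (Finset.mem_filter.1 hy).2
  have hall : (T.card : ℝ) ≤ N ^ d * (2 * N + 1) :=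
    card_le_of_abs_snd_sub_le (h := 0) fun y hy ↦ by simpa using hT y hy
  calc
    ∑ y ∈ T, b (y - x) ≤ ∑ y ∈ T, ((if |(y - x).2| ≤ t then C else 0) + δ) :=
      Finset.sum_le_sum fun y _ ↦ hb (y - x)
    _ = (T.filter fun y ↦ |(y - x).2| ≤ t).card * C + T.card * δ := by
      rw [Finset.sum_add_distrib, ← Finset.sum_filter, Finset.sum_const, Finset.sum_const,
        nsmul_eq_mul, nsmul_eq_mul]
    _ ≤ N ^ d * (2 * t + 1) * C + N ^ d * (2 * N + 1) * δ := by gcongr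
    _ = _ := by ring

/-- `U` is a superharmonic function on the cylinder which dominates the probability of hitting `A`
before leaving `B̃_j`. The three parameters bound, up to the factor `|A|` in the last two, the
average of `U` over the neighbours of a point of `A`, its values at height `N` above or below the
centre of `B_j`, and its average over `B_0`. -/
structure IsHittingMajorant (j : ℤ) (A : Finset (Cyl d N)) (ρ M σ : ℝ) (U : Cyl d N → ℝ) :
    Prop where
  nonneg : ∀ y : Cyl d N, |y.2 - j * N| ≤ 2 * N → 0 ≤ U y
  one_le : ∀ y ∈ A, 1 ≤ U y
  stepAvg_le : ∀ y, stepAvg (cylStep d N) U y ≤ U y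
  stepAvg_le_of_mem : ∀ y ∈ A, stepAvg (cylStep d N) U y ≤ ρ
  le_of_abs_sub_eq : ∀ y : Cyl d N, |y.2 - j * N| = N → U y ≤ M * A.card
  sum_le : ∀ T : Finset (Cyl d N), (∀ y ∈ T, |y.2| ≤ N) →
    ∑ y ∈ T, U y ≤ σ * A.card * (N ^ d * (2 * N + 1))

lemma four_mul_abs_sub_le_of_mem_Cblk {j : ℤ} {x : Cyl d N} (hx : x ∈ Cblk d N j) :
    4 * |x.2 - j * N| ≤ 3 * N := by
  have : 4 * |(x.2 - j * N : ℝ)| ≤ 3 * N := by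
    rw [← le_div_iff₀' four_pos, abs_le]
    constructor <;> linarith [hx.1, hx.2]
  exact_mod_cast this

lemma exists_rep_sub_comp_eq_zero {m : ℕ} {F : Set (Cyl d N)} (hF : F ∈ Lcoll d N m) :
    ∃ emb : Fin (d + 1 - m) ↪ Fin (d + 1),
      ∀ x ∈ F, ∀ y ∈ F, rep d N (x - y) ∘ emb = 0 := by
  obtain ⟨I, hI, y₀, rfl⟩ := hF
  have hIc : Iᶜ.card = d + 1 - m := by rw [Finset.card_compl, Fintype.card_fin, hI]
  refine ⟨(Iᶜ.orderEmbOfFin hIc).toEmbedding, ?_⟩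
  rintro _ ⟨v, hv, rfl⟩ _ ⟨v', hv', rfl⟩
  ext k
  have hk : Iᶜ.orderEmbOfFin hIc k ∉ I := Finset.mem_compl.1 (Finset.orderEmbOfFin_mem _ hIc k)
  have hvk := hv _ hk
  have hvk' := hv' _ hk
  simp only [Function.comp_apply, RelEmbedding.coe_toEmbedding, Pi.zero_apply]
  generalize Iᶜ.orderEmbOfFin hIc k = l at hvk hvk'
  induction l using Fin.lastCases with
  | last => simp [projE, hvk, hvk']
  | cast i => simp [projE, hvk, hvk']

lemma abs_snd_sub_le {j : ℤ} {x y : Cyl d N} (hx : x ∈ Cblk d N j)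
    (hy : |y.2 - j * N| ≤ 2 * N) : |(y - x).2| ≤ 3 * N := by
  have hxC := four_mul_abs_sub_le_of_mem_Cblk hx
  have := abs_sub_le y.2 (j * N) x.2
  rw [abs_sub_comm (j * N : ℤ)] at this
  rw [Prod.snd_sub]
  lia

lemma IsBarrier.le_div_pow_snd {C : ℝ} {b : Cyl d N → ℝ}
    (hb : IsBarrier (Function.Embedding.refl (Fin (d + 1))) C b) {t : ℝ} (ht : 0 < t)
    (htN : t ≤ N) {w : Cyl d N} (hw : t ≤ |(w.2 : ℝ)|) : b w ≤ C / t ^ (d - 1) := by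
  simpa using hb.le_div_pow w (Fin.last d) t ht htN (by simpa using hw)

lemma IsBarrier.comp_sub_le_of_abs_sub_eq [NeZero N] {C : ℝ} {b : Cyl d N → ℝ}
    (hb : IsBarrier (Function.Embedding.refl (Fin (d + 1))) C b) {j : ℤ} {x y : Cyl d N}
    (hx : x ∈ Cblk d N j) (hy : |y.2 - j * N| = N) :
    b (y - x) ≤ C * 4 ^ (d - 1) / N ^ (d - 1) := by
  have hN : (0 : ℝ) < N := Nat.cast_pos.2 (NeZero.pos N)
  have hdist : (N : ℤ) ≤ 4 * |(y - x).2| := by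
    have hxC := four_mul_abs_sub_le_of_mem_Cblk hx
    have := abs_sub_le y.2 x.2 (j * N)
    rw [Prod.snd_sub]
    lia
  have hdist' : (N : ℝ) ≤ 4 * |((y - x).2 : ℝ)| := mod_cast hdist
  refine (hb.le_div_pow_snd (by positivity : (0 : ℝ) < N / 4) (by linarith)
    (by linarith)).trans_eq ?_
  rw [div_pow, div_div_eq_mul_div]

lemma IsBarrier.sum_comp_sub_le {C ε : ℝ} {b : Cyl d N → ℝ} {t : ℕ}
    (hb : IsBarrier (Function.Embedding.refl (Fin (d + 1))) C b) (hC : 0 ≤ C) (hε : 0 ≤ ε)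
    (ht : 0 < t) (htN : t ≤ N) (htε : C / t ^ (d - 1) ≤ ε / 2)
    (hNε : C * (2 * t + 1) ≤ ε / 2 * (2 * N + 1)) {T : Finset (Cyl d N)}
    (hT : ∀ y ∈ T, |y.2| ≤ N) (x : Cyl d N) :
    ∑ y ∈ T, b (y - x) ≤ ε * (N ^ d * (2 * N + 1)) := by
  have : NeZero N := ⟨by lia⟩
  refine (DiscCyl.sum_comp_sub_le (t := t) hC (by positivity : 0 ≤ ε / 2) hb.le_const
    (fun w hw ↦ (hb.le_div_pow_snd (mod_cast ht) (mod_cast htN) (mod_cast hw)).trans htε)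
    hT x).trans ?_
  calc
    (N : ℝ) ^ d * (C * (2 * t + 1) + ε / 2 * (2 * N + 1))
    _ ≤ N ^ d * (ε / 2 * (2 * N + 1) + ε / 2 * (2 * N + 1)) := by gcongr
    _ = _ := by ring

section Min

variable [DecidableEq κ] [Nonempty κ] {κ₂ : Type*} [Fintype κ₂] {emb : κ ↪ Fin (d + 1)}
  {emb₂ : κ₂ ↪ Fin (d + 1)} {C₁ C₂ ε : ℝ}
  {b₁ b₂ : Cyl d N → ℝ} {μ : (κ → ℤ) → Measure (ℕ → κ → ℤ)} {j : ℤ} {A : Finset (Cyl d N)}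
  {x₀ : Cyl d N} {r t : ℕ}

/-- The minimum of three superharmonic functions: the hitting probability of the flat through `x₀`
in the infinite lattice, a barrier `b₁` for this flat which takes over where the cylinder is not
locally the lattice, and the union bound over barriers `b₂` for the points of `A`. -/
noncomputable def hitMajorant (emb : κ ↪ Fin (d + 1)) (μ : (κ → ℤ) → Measure (ℕ → κ → ℤ)) (ε : ℝ)
    (b₁ b₂ : Cyl d N → ℝ) (A : Finset (Cyl d N)) (x₀ y : Cyl d N) : ℝ :=
  min (min (hitProb μ (rep d N (y - x₀) ∘ emb) + ε) (b₁ (y - x₀))) (∑ x ∈ A, b₂ (y - x))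

lemma stepAvg_hitMajorant_le (hb₁ : IsBarrier emb C₁ b₁) (hb₂ : IsBarrier emb₂ C₂ b₂)
    (hμ : IsMarkovFamily (walkKernel unitVec) μ) (hr : 0 < r) (hrN : 2 * r < N)
    (hrε : C₁ / r ^ (Fintype.card κ - 2) ≤ ε) (y : Cyl d N) :
    stepAvg (cylStep d N) (hitMajorant emb μ ε b₁ b₂ A x₀) y ≤
      hitMajorant emb μ ε b₁ b₂ A x₀ y := by
  refine stepAvg_min_le ?_ (.inl ?_)
  · rw [stepAvg_sum A fun x y ↦ b₂ (y - x)]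
    refine Finset.sum_le_sum fun x _ ↦ ?_
    rw [stepAvg_comp_sub]
    exact hb₂.stepAvg_le _
  · rw [stepAvg_comp_sub (f := fun y ↦ min (hitProb μ (rep d N y ∘ emb) + ε) (b₁ y))]
    exact hb₁.stepAvg_min_hitProb_le hμ hr hrN hrε _

lemma stepAvg_hitMajorant_le_of_rep_eq_zero (hμ : IsMarkovFamily (walkKernel unitVec) μ)
    (hN : 2 < N) {y : Cyl d N} (hy : rep d N (y - x₀) ∘ emb = 0) :
    stepAvg (cylStep d N) (hitMajorant emb μ ε b₁ b₂ A x₀) y ≤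
      1 - Fintype.card κ / (d + 1) * (1 - (μ 0).real {ω | ∃ n, 1 ≤ n ∧ ω n = 0}) + ε := by
  have hstep := stepAvg_comp_rep_sub emb (hitProb μ) (w := y - x₀) fun k ↦ by
    have : rep d N (y - x₀) (emb k) = 0 := congrFun hy k
    rw [this]
    simpa using hN
  rw [hy, hitProb_zero hμ, stepAvg_hitProb_zero hμ] at hstep
  calc
    _ ≤ stepAvg (cylStep d N) (fun y ↦ hitProb μ (rep d N (y - x₀) ∘ emb) + ε) y :=
      stepAvg_mono fun s ↦ (min_le_left _ _).trans (min_le_left _ _)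
    _ = stepAvg (cylStep d N) (fun y ↦ hitProb μ (rep d N y ∘ emb)) (y - x₀) + ε := by
      rw [stepAvg_add (f := fun y ↦ hitProb μ (rep d N (y - x₀) ∘ emb)), stepAvg_const,
        stepAvg_comp_sub (f := fun y ↦ hitProb μ (rep d N y ∘ emb))]
    _ = _ := by linear_combination hstep

lemma isHittingMajorant_hitMajorant (hb₁ : IsBarrier emb C₁ b₁)
    (hb₂ : IsBarrier (Function.Embedding.refl (Fin (d + 1))) C₂ b₂)
    (hμ : IsMarkovFamily (walkKernel unitVec) μ) (hC₂ : 0 ≤ C₂) (hε : 0 ≤ ε)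
    (hr : 0 < r) (hrN : 2 * r < N) (hrε : C₁ / r ^ (Fintype.card κ - 2) ≤ ε)
    (ht : 0 < t) (htN : t ≤ N) (htε : C₂ / t ^ (d - 1) ≤ ε / 2)
    (hNε : C₂ * (2 * t + 1) ≤ ε / 2 * (2 * N + 1))
    (hAC : ↑A ⊆ Cblk d N j) (hx₀ : x₀ ∈ A) (hA : ∀ y ∈ A, rep d N (y - x₀) ∘ emb = 0) :
    IsHittingMajorant j A
      (1 - Fintype.card κ / (d + 1) * (1 - (μ 0).real {ω | ∃ n, 1 ≤ n ∧ ω n = 0}) + ε)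
      (C₂ * 4 ^ (d - 1) / N ^ (d - 1)) ε (hitMajorant emb μ ε b₁ b₂ A x₀) where
  nonneg y hy := le_min
    (le_min (add_nonneg measureReal_nonneg hε) (hb₁.nonneg _ (abs_snd_sub_le (hAC hx₀) hy)))
    (Finset.sum_nonneg fun x hx ↦ hb₂.nonneg _ (abs_snd_sub_le (hAC hx) hy))
  one_le y hy := by
    have hy2 : |y.2 - j * N| ≤ 2 * N := by
      have := four_mul_abs_sub_le_of_mem_Cblk (hAC hy)
      lia
    have hsum : b₂ (y - y) ≤ ∑ x ∈ A, b₂ (y - x) :=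
      Finset.single_le_sum (f := fun x ↦ b₂ (y - x))
        (fun x hx ↦ hb₂.nonneg _ (abs_snd_sub_le (hAC hx) hy2)) hy
    refine le_min (le_min ?_ (hb₁.one_le _ (abs_snd_sub_le (hAC hx₀) hy2) (hA y hy)))
      ((hb₂.one_le _ (abs_snd_sub_le (hAC hy) hy2) ?_).trans hsum)
    · rw [hA y hy, hitProb_zero hμ]
      linarith
    · ext k
      induction k using Fin.lastCases <;> simp
  stepAvg_le := stepAvg_hitMajorant_le hb₁ hb₂ hμ hr hrN hrε
  stepAvg_le_of_mem y hy := stepAvg_hitMajorant_le_of_rep_eq_zero hμ (by lia) (hA y hy)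
  le_of_abs_sub_eq y hy := by
    have : NeZero N := ⟨by lia⟩
    refine (min_le_right _ _).trans ((Finset.sum_le_card_nsmul _ _ _ fun x hx ↦ ?_).trans_eq
      (by rw [nsmul_eq_mul, mul_comm]))
    exact hb₂.comp_sub_le_of_abs_sub_eq (hAC hx) hy
  sum_le T hT := calc
    _ ≤ ∑ y ∈ T, ∑ x ∈ A, b₂ (y - x) := Finset.sum_le_sum fun y _ ↦ min_le_right _ _
    _ = ∑ x ∈ A, ∑ y ∈ T, b₂ (y - x) := Finset.sum_comm
    _ ≤ A.card • (ε * (N ^ d * (2 * N + 1))) := Finset.sum_le_card_nsmul _ _ _ fun x _ ↦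
      hb₂.sum_comp_sub_le hC₂ hε ht htN htε hNε hT x
    _ = _ := by
      rw [nsmul_eq_mul]
      ring

end Min

lemma exists_div_natCast_pow_le (C : ℝ) {n : ℕ} (hn : n ≠ 0) {ε : ℝ} (hε : 0 < ε) :
    ∃ t : ℕ, 0 < t ∧ C / t ^ n ≤ ε := by
  have hlim : Tendsto (fun t : ℕ ↦ C / (t : ℝ) ^ n) atTop (nhds 0) :=
    tendsto_const_nhds.div_atTop ((tendsto_pow_atTop hn).comp tendsto_natCast_atTop_atTop)
  exact ((eventually_gt_atTop 0).and (hlim.eventually_le_const hε)).exists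

lemma exists_isHittingMajorant {d m : ℕ} (hm : 3 ≤ d + 1 - m)
    {Q : ZLat (d + 1 - m) → Measure (ℕ → ZLat (d + 1 - m))} (hQ : IsLatRW (d + 1 - m) Q)
    {ε : ℝ} (hε : 0 < ε) :
    ∃ C : ℝ, 0 < C ∧ ∀ᶠ N in atTop, ∀ j, ∀ A ∈ Adm d N j m, ∃ U, IsHittingMajorant j A
      (m / (d + 1) + (1 - m / (d + 1)) * retProb (d + 1 - m) Q + ε) (C / N ^ (d - 1)) ε U := by
  have : Nonempty (Fin (d + 1 - m)) := ⟨⟨0, by lia⟩⟩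
  obtain ⟨C₁, -, hbar₁⟩ := exists_isBarrier (κ := Fin (d + 1 - m)) d (by simpa using hm)
  obtain ⟨C₂, hC₂, hbar₂⟩ := exists_isBarrier (κ := Fin (d + 1)) d (by simp; lia)
  obtain ⟨r, hr, hrε⟩ := exists_div_natCast_pow_le C₁ (n := d + 1 - m - 2) (by lia) hε
  obtain ⟨t, ht, htε⟩ := exists_div_natCast_pow_le C₂ (n := d - 1) (by lia) (half_pos hε)
  have hlarge : ∀ᶠ N : ℕ in atTop, C₂ * (2 * t + 1) ≤ ε / 2 * (2 * N + 1) :=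
    (((tendsto_natCast_atTop_atTop.const_mul_atTop two_pos).atTop_add
      tendsto_const_nhds).const_mul_atTop (half_pos hε)).eventually_ge_atTop _
  refine ⟨C₂ * 4 ^ (d - 1), by positivity, ?_⟩
  filter_upwards [hlarge, eventually_ge_atTop 4, eventually_gt_atTop (2 * r),
    eventually_ge_atTop t] with N hNε hN4 hrN htN j A ⟨⟨x₀, hx₀⟩, hAC, F, hF, hAF⟩
  obtain ⟨emb, hemb⟩ := exists_rep_sub_comp_eq_zero hF
  obtain ⟨b₁, hb₁⟩ := hbar₁ N hN4 emb
  obtain ⟨b₂, hb₂⟩ := hbar₂ N hN4 (.refl _)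
  have hcard : ((d + 1 - m : ℕ) : ℝ) / (d + 1) = 1 - m / (d + 1) := by
    rw [Nat.cast_sub (by lia)]
    field_simp
    push_cast
    ring
  have hmaj := isHittingMajorant_hitMajorant hb₁ hb₂ (isMarkovFamily_of_isLatRW hQ) hC₂.le hε.le
    hr hrN (by simpa using hrε) ht htN htε hNε hAC hx₀ fun y hy ↦ hemb y (hAF hy) x₀ (hAF hx₀)
  rw [Fintype.card_fin, hcard] at hmaj
  refine ⟨hitMajorant emb Q ε b₁ b₂ A x₀, ?_⟩
  convert hmaj using 1
  rw [retProb, measureReal_def]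
  ring

end HittingMajorant

section Blocks

variable {d N : ℕ} {j : ℤ} {x y : Cyl d N}

lemma mem_Bblk_iff : y ∈ Bblk d N j ↔ |y.2 - j * N| ≤ N := by
  simp only [Bblk, Set.mem_ofPred_eq, abs_le]
  constructor <;> rintro ⟨h1, h2⟩ <;> constructor <;> linarith

lemma mem_Btl_iff : y ∈ Btl d N j ↔ |y.2 - j * N| < 2 * N := by
  simp only [Btl, Set.mem_ofPred_eq, abs_lt]
  constructor <;> rintro ⟨h1, h2⟩ <;> constructor <;> linarith

lemma Bblk_subset_Btl [NeZero N] : Bblk d N j ⊆ Btl d N j := fun y hy ↦ by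
  have := NeZero.pos N
  rw [mem_Bblk_iff] at hy
  rw [mem_Btl_iff]
  lia

lemma Cblk_subset_Bblk : Cblk d N j ⊆ Bblk d N j := fun y hy ↦ by
  have := four_mul_abs_sub_le_of_mem_Cblk hy
  rw [mem_Bblk_iff]
  lia

lemma abs_snd_add_cylStep_sub_le (s : Fin (d + 1) × ℤˣ) :
    |(y + cylStep d N s).2 - j * N| ≤ |y.2 - j * N| + 1 := by
  have hstep : |(cylStep d N s).2| ≤ 1 := abs_unitVec_le_one s (Fin.last d)
  rw [Prod.snd_add, add_sub_right_comm]
  exact (abs_add_le _ _).trans (add_le_add_right hstep _)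

lemma abs_snd_sub_le_add_one (x : Cyl d N) (s : Fin (d + 1) × ℤˣ) :
    |x.2 - j * N| ≤ |(x + cylStep d N s).2 - j * N| + 1 := by
  have hstep : |(cylStep d N s).2| ≤ 1 := abs_unitVec_le_one s (Fin.last d)
  have := abs_sub_le x.2 (x + cylStep d N s).2 (j * N)
  rw [Prod.snd_add, sub_add_cancel_left, abs_neg] at this
  rw [Prod.snd_add]
  lia

lemma abs_snd_sub_eq_of_enter {s : Fin (d + 1) × ℤˣ} (hx : x ∉ Bblk d N j)
    (hs : x + cylStep d N s ∈ Bblk d N j) : |(x + cylStep d N s).2 - j * N| = N := by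
  rw [mem_Bblk_iff] at hx hs
  have := abs_snd_sub_le_add_one (j := j) x s
  lia

end Blocks

section Covering

variable {d N : ℕ} {j : ℤ} {A : Finset (Cyl d N)} {ρ M σ c l : ℝ} {U : Cyl d N → ℝ}
  {μ : Cyl d N → Measure (ℕ → Cyl d N)}

lemma lawP_real_eq [NeZero N] (hμ : ∀ x, IsProbabilityMeasure (μ x)) (T : Set (ℕ → Cyl d N)) :
    (lawP d N μ).real T =
      (∑ x ∈ Finset.univ ×ˢ Finset.Icc (-N : ℤ) N, (μ x).real T) / (N ^ d * (2 * N + 1)) := by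
  have hmem (x : Cyl d N) : x ∈ Finset.univ ×ˢ Finset.Icc (-N : ℤ) N ↔ x ∈ Bblk d N 0 := by
    simp [Bblk]
  have hsum : Measure.sum (fun x ↦ if x ∈ Bblk d N 0 then μ x else 0) T =
      ∑ x ∈ Finset.univ ×ˢ Finset.Icc (-N : ℤ) N, μ x T := by
    rw [Measure.sum_apply_of_countable, tsum_eq_sum fun x hx ↦ by
      rw [if_neg fun h ↦ hx ((hmem x).2 h), Measure.coe_zero, Pi.zero_apply]]
    exact Finset.sum_congr rfl fun x hx ↦ by rw [if_pos ((hmem x).1 hx)]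
  have hvol : ((N : ℝ≥0∞) ^ d * (2 * N + 1)).toReal = N ^ d * (2 * N + 1) :=
    mod_cast ENNReal.toReal_natCast (N ^ d * (2 * N + 1))
  rw [lawP, measureReal_ennreal_smul_apply, measureReal_def, hsum,
    ENNReal.toReal_sum fun x _ ↦ measure_ne_top _ _, div_eq_inv_mul, ENNReal.toReal_inv, hvol]
  rfl

lemma lawP_real_le_of_forall_le [NeZero N] (hμ : ∀ x, IsProbabilityMeasure (μ x))
    {T : Set (ℕ → Cyl d N)} {f : Cyl d N → ℝ} {a b : ℝ} (ha : 0 ≤ a)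
    (hT : ∀ x, (μ x).real T ≤ a * (1 + f x))
    (hf : ∀ S : Finset (Cyl d N), (∀ y ∈ S, |y.2| ≤ N) → ∑ y ∈ S, f y ≤ b * (N ^ d * (2 * N + 1))) :
    (lawP d N μ).real T ≤ a * (1 + b) := by
  have hN : (0 : ℝ) < N := Nat.cast_pos.2 (NeZero.pos N)
  set S : Finset (Cyl d N) := Finset.univ ×ˢ Finset.Icc (-N : ℤ) N with hS
  have hSN : ∀ y ∈ S, |y.2| ≤ N := fun y hy ↦ by
    rw [hS, Finset.mem_product, Finset.mem_Icc] at hy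
    exact abs_le.2 hy.2
  have hcard : (S.card : ℝ) ≤ N ^ d * (2 * N + 1) :=
    card_le_of_abs_snd_sub_le (h := 0) fun y hy ↦ by simpa using hSN y hy
  rw [lawP_real_eq hμ, div_le_iff₀ (by positivity)]
  calc
    ∑ x ∈ S, (μ x).real T ≤ ∑ x ∈ S, a * (1 + f x) := Finset.sum_le_sum fun x _ ↦ hT x
    _ = a * (S.card + ∑ x ∈ S, f x) := by
      rw [← Finset.mul_sum, Finset.sum_add_distrib, Finset.sum_const, nsmul_one]
    _ ≤ a * (N ^ d * (2 * N + 1) + b * (N ^ d * (2 * N + 1))) := by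
      gcongr
      exact hf S hSN
    _ = _ := by ring

/-- The excursion weight `1 + c U` on `B̃_j` built from a hitting majorant `U`. -/
noncomputable def excursionWeight (j : ℤ) (c : ℝ) (U : Cyl d N → ℝ) (y : Cyl d N) : ℝ :=
  if y ∈ Btl d N j then 1 + c * U y else 1

lemma excursionWeight_of_mem {y : Cyl d N} (hy : y ∈ Btl d N j) :
    excursionWeight j c U y = 1 + c * U y := if_pos hy

namespace IsHittingMajorant

lemma stepAvg_excursionWeight_le (hU : IsHittingMajorant j A ρ M σ U) (hc : 0 ≤ c) {y : Cyl d N}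
    (hy : y ∈ Btl d N j) :
    stepAvg (cylStep d N) (excursionWeight j c U) y ≤ 1 + c * stepAvg (cylStep d N) U y := by
  calc
    _ ≤ stepAvg (cylStep d N) (fun x ↦ 1 + c * U x) y := stepAvg_mono fun s ↦ by
      rw [excursionWeight]
      split_ifs
      · exact le_rfl
      · have := abs_snd_add_cylStep_sub_le (y := y) (j := j) s
        rw [mem_Btl_iff] at hy
        exact le_add_of_nonneg_right (mul_nonneg hc (hU.nonneg _ (by lia)))
    _ = _ := by rw [stepAvg_add (f := fun _ ↦ 1), stepAvg_const, stepAvg_const_mul]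

lemma isExcursionWeight [NeZero N] (hU : IsHittingMajorant j A ρ M σ U) (hA : ↑A ⊆ Bblk d N j)
    (hM : 0 ≤ M) (hc : 0 ≤ c) (hl : Real.exp l * (1 + c * ρ) ≤ 1 + c) :
    IsExcursionWeight (cylStep d N) (Bblk d N j) (Btl d N j) A l (1 + c * (M * A.card))
      (excursionWeight j c U) where
  one_le y := by
    rw [excursionWeight]
    split_ifs with hy
    · exact le_add_of_nonneg_right (mul_nonneg hc (hU.nonneg y (mem_Btl_iff.1 hy).le))
    · exact le_rfl
  stepAvg_le y hy := by
    rw [excursionWeight_of_mem hy]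
    refine (hU.stepAvg_excursionWeight_le hc hy).trans ?_
    gcongr
    exact hU.stepAvg_le y
  exp_mul_stepAvg_le y hy := by
    have hyBtl := Bblk_subset_Btl (hA hy)
    rw [excursionWeight_of_mem hyBtl]
    calc
      _ ≤ Real.exp l * (1 + c * ρ) := by
        gcongr
        refine (hU.stepAvg_excursionWeight_le hc hyBtl).trans ?_
        gcongr
        exact hU.stepAvg_le_of_mem y hy
      _ ≤ 1 + c := hl
      _ ≤ 1 + c * U y := by
        gcongr
        exact le_mul_of_one_le_right hc (hU.one_le y hy)
  le_of_enter x hx s hs := by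
    rw [excursionWeight_of_mem (Bblk_subset_Btl hs)]
    gcongr
    exact hU.le_of_abs_sub_eq _ (abs_snd_sub_eq_of_enter hx hs)
  one_le_bound := le_add_of_nonneg_right (by positivity)

lemma lawP_real_cover_le [NeZero N] (hU : IsHittingMajorant j A ρ M σ U) (hA : ↑A ⊆ Bblk d N j)
    (hM : 0 ≤ M) (hc : 0 ≤ c) (hl : Real.exp l * (1 + c * ρ) ≤ 1 + c) (hμ : IsCylRW d N μ)
    (k : ℕ) :
    (lawP d N μ).real {ω | ∀ x ∈ A, x ∈ ranE ω (DD d N j k ω)} ≤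
      Real.exp (-l * A.card) * (1 + c * (M * A.card)) ^ k * (1 + c * (σ * A.card)) := by
  rw [DD_eq_departT]
  refine lawP_real_le_of_forall_le (f := fun x ↦ if x ∈ Bblk d N j then c * U x else 0) hμ.1
    (by positivity) (fun x ↦ ?_) fun S hS ↦ ?_
  · refine ((hU.isExcursionWeight hA hM hc hl).real_cover_departT_le
      (isMarkovFamily_of_isCylRW hμ) Bblk_subset_Btl hA k x).trans_eq ?_
    rw [← mul_assoc]
    split_ifs with hx
    · rw [excursionWeight_of_mem (Bblk_subset_Btl hx)]
    · rw [add_zero]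
  · rw [← Finset.sum_filter, ← Finset.mul_sum, mul_assoc]
    gcongr
    exact hU.sum_le _ fun y hy ↦ hS y (Finset.mem_filter.1 hy).1

lemma lawP_real_cover_le_exp [NeZero N] (hU : IsHittingMajorant j A ρ M σ U)
    (hA : ↑A ⊆ Bblk d N j) (hM : 0 ≤ M) (hσ : 0 ≤ σ) (hc : 0 ≤ c)
    (hl : Real.exp l * (1 + c * ρ) ≤ 1 + c) (hμ : IsCylRW d N μ) (k : ℕ) :
    (lawP d N μ).real {ω | ∀ x ∈ A, x ∈ ranE ω (DD d N j k ω)} ≤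
      Real.exp ((-l + k * (c * M) + c * σ) * A.card) := by
  have one_add_le_exp (a : ℝ) : 1 + a ≤ Real.exp a := by linarith [Real.add_one_le_exp a]
  calc
    _ ≤ Real.exp (-l * A.card) * (1 + c * (M * A.card)) ^ k * (1 + c * (σ * A.card)) :=
      hU.lawP_real_cover_le hA hM hc hl hμ k
    _ ≤ Real.exp (-l * A.card) * Real.exp (c * (M * A.card)) ^ k * Real.exp (c * (σ * A.card)) := by
      gcongr <;> exact one_add_le_exp _
    _ = _ := by
      rw [← Real.exp_nat_mul, ← Real.exp_add, ← Real.exp_add]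
      ring_nf

end IsHittingMajorant

lemma exists_exp_add_mul_add_lt_one {lam χ : ℝ} (h : Real.exp lam * χ < 1) :
    ∃ η > 0, Real.exp (lam + η) * (χ + η) < 1 := by
  have hlim : Tendsto (fun η : ℝ ↦ Real.exp (lam + η) * (χ + η)) (nhdsWithin 0 (Set.Ioi 0))
      (nhds (Real.exp lam * χ)) := by
    have hcont : Continuous fun η : ℝ ↦ Real.exp (lam + η) * (χ + η) := by fun_prop
    simpa using (hcont.tendsto 0).mono_left nhdsWithin_le_nhds
  exact (eventually_mem_nhdsWithin.and (hlim.eventually_lt_const h)).exists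

lemma exists_excursion_parameters {lam χ : ℝ} (hlam : 0 < lam) (h : Real.exp lam * χ < 1) :
    ∃ η > 0, ∃ c > 0, ∃ ε > 0,
      Real.exp (lam + η) * (1 + c * (χ + ε)) ≤ 1 + c ∧ c * ε ≤ η / 2 := by
  obtain ⟨η, hη, hηχ⟩ := exists_exp_add_mul_add_lt_one h
  have hexp : 1 < Real.exp (lam + η) := Real.one_lt_exp_iff.2 (by positivity)
  set c := (Real.exp (lam + η) - 1) / (1 - Real.exp (lam + η) * (χ + η))
  have hcpos : 0 < c := div_pos (by linarith) (by linarith)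
  have hceq : c * (1 - Real.exp (lam + η) * (χ + η)) = Real.exp (lam + η) - 1 :=
    div_mul_cancel₀ _ (by linarith)
  refine ⟨η, hη, c, hcpos, min η (η / (2 * c)), by positivity, ?_, ?_⟩
  · calc
      _ ≤ Real.exp (lam + η) * (1 + c * (χ + η)) := by
        gcongr
        exact min_le_left _ _
      _ = 1 + c := by linear_combination -hceq
  · calc
      _ ≤ c * (η / (2 * c)) := by
        gcongr
        exact min_le_right _ _
      _ = η / 2 := by field_simp

end Covering

/-- **Theorem 1.2, part 2.** Under `χ(λ) < 1`, there exist `N₁ > 0`, `u₁ > 0` such that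
for `N ≥ N₁`, all `j ∈ ℤ` and all `A ∈ A^j_m`,
`P[X_{[0, D^j_{u₁ N^{d-1}}]} ⊇ A] ≤ exp(-λ|A|)`. -/
theorem statement_4 (d m : ℕ) (hd : 3 ≤ d) (hm1 : 1 ≤ m) (hm2 : m ≤ d - 2)
    (Q : ZLat (d + 1 - m) → Measure (ℕ → ZLat (d + 1 - m))) (hQ : IsLatRW (d + 1 - m) Q)
    (lam : ℝ) (hlam : 0 < lam)
    (hchi : Real.exp lam *
        ((m : ℝ) / (d + 1) + (1 - (m : ℝ) / (d + 1)) * retProb (d + 1 - m) Q) < 1)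
    (Pl : ∀ N : ℕ, Cyl d N → Measure (ℕ → Cyl d N))
    (hPl : ∀ N : ℕ, IsCylRW d N (Pl N)) :
    ∃ N₁ : ℕ, 0 < N₁ ∧ ∃ u₁ : ℝ, 0 < u₁ ∧
      ∀ N : ℕ, N₁ ≤ N → ∀ j : ℤ, ∀ A ∈ Adm d N j m,
        ((lawP d N (Pl N))
            {ω | ∀ x ∈ A, x ∈ ranE ω (DD d N j ⌊u₁ * (N : ℝ) ^ (d - 1)⌋₊ ω)}).toReal
          ≤ Real.exp (-lam * A.card) := by
  obtain ⟨η, hη, c, hc, ε, hε, hexp, hcε⟩ := exists_excursion_parameters hlam hchi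
  obtain ⟨C, hC, hmaj⟩ := exists_isHittingMajorant (m := m) (by lia) hQ hε
  obtain ⟨N₁, hN₁⟩ := eventually_atTop.1 hmaj
  refine ⟨N₁ + 1, N₁.succ_pos, η / (2 * c * C), by positivity, fun N hN j A hA ↦ ?_⟩
  have : NeZero N := ⟨by lia⟩
  have hNpos : (0 : ℝ) < N := Nat.cast_pos.2 (NeZero.pos N)
  obtain ⟨U, hU⟩ := hN₁ N (by lia) j A hA
  refine (hU.lawP_real_cover_le_exp (hA.2.1.trans Cblk_subset_Bblk) (by positivity) hε.le hc.le
    hexp (hPl N) _).trans ?_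
  gcongr
  set k := ⌊η / (2 * c * C) * (N : ℝ) ^ (d - 1)⌋₊
  have hk : k * (c * (C / N ^ (d - 1))) ≤ η / 2 := by
    calc
      _ ≤ η / (2 * c * C) * N ^ (d - 1) * (c * (C / N ^ (d - 1))) := by
        gcongr
        exact Nat.floor_le (by positivity)
      _ = η / 2 := by field_simp
  linarith

end DiscCyl
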